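/- arXiv:2206.09629 — 7 statements merged into one kernel-verified Lean document; each statement's English description precedes it below -/
import Mathlib

section
/- Let X be a set and R : X × X → X × X a bijection satisfying the set-theoretic Yang–Baxter equation, and let n ≥ 2. For each pair of distinct indices i, j ∈ {1, …, n} let R_{ij} : Xⁿ → Xⁿ be the bijection applying R to the coordinates in positions (i, j) (in that order) and the identity elsewhere. Then the assignment λ_{ij} ↦ R_{ij} defines a group homomorphism φₙ^R : VPₙ → Sym(Xⁿ); equivalently, the permutations R_{ij} satisfy R_{ij} ∘ R_{kl} = R_{kl} ∘ R_{ij} whenever i, j, k, l are pairwise distinct, and R_{ki} ∘ R_{kj} ∘ R_{ij} = R_{ij} ∘ R_{kj} ∘ R_{ki} for pairwise distinct i, j, k. -/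
/-- Lift of a map on the factors (1,2) of a triple product. -/
def lift12 {X Y Z : Type*} (T : X × Y → X × Y) : X × Y × Z → X × Y × Z :=
  fun (x, y, z) => ((T (x, y)).1, (T (x, y)).2, z)

/-- Lift of a map on the factors (1,3) of a triple product. -/
def lift13 {X Y Z : Type*} (T : X × Z → X × Z) : X × Y × Z → X × Y × Z :=
  fun (x, y, z) => ((T (x, z)).1, y, (T (x, z)).2)

/-- Lift of a map on the factors (2,3) of a triple product. -/
def lift23 {X Y Z : Type*} (T : Y × Z → Y × Z) : X × Y × Z → X × Y × Z :=
  fun (x, y, z) => (x, (T (y, z)).1, (T (y, z)).2)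

/-- `R` satisfies the set-theoretic Yang–Baxter equation. -/
def IsYB {X : Type*} (R : X × X → X × X) : Prop :=
  lift12 (X := X) (Y := X) (Z := X) R ∘ lift13 R ∘ lift23 R =
    lift23 (X := X) (Y := X) (Z := X) R ∘ lift13 R ∘ lift12 R

/-- `act R i j` applies `R` to the coordinates in positions `(i, j)` (in that order)
and the identity to all other coordinates of `Xⁿ`. -/
def act {X : Type*} {n : ℕ} (R : X × X → X × X) (i j : Fin n) (f : Fin n → X) :
    Fin n → X :=
  Function.update (Function.update f i (R (f i, f j)).1) j (R (f i, f j)).2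

/-! For distinct positions `i, j, k`, reading off the coordinates `(f i, f j, f k)` intertwines
`R_{ij}`, `R_{ik}`, `R_{jk}` on `Xⁿ` with `R₁₂`, `R₁₃`, `R₂₃` on `X³`, and these three maps fix all
other coordinates; so the Yang–Baxter equation on `X³` lifts to `Xⁿ`. -/

section Coordinates

variable {X : Type*} {n : ℕ} (R S : X × X → X × X) {i j k l m : Fin n}

theorem act_apply_left (hij : i ≠ j) (f : Fin n → X) : act R i j f i = (R (f i, f j)).1 := by
  rw [act, Function.update_of_ne hij, Function.update_self]

theorem act_apply_right (f : Fin n → X) : act R i j f j = (R (f i, f j)).2 :=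
  Function.update_self ..

theorem act_apply_of_ne (hmi : m ≠ i) (hmj : m ≠ j) (f : Fin n → X) : act R i j f m = f m := by
  rw [act, Function.update_of_ne hmj, Function.update_of_ne hmi]

theorem act_update_of_ne (hmi : m ≠ i) (hmj : m ≠ j) (f : Fin n → X) (x : X) :
    act R i j (Function.update f m x) = Function.update (act R i j f) m x := by
  simp only [act, Function.update_of_ne hmi.symm, Function.update_of_ne hmj.symm,
    Function.update_comm hmi, Function.update_comm hmj]

theorem act_comp_act_comm (hik : i ≠ k) (hil : i ≠ l) (hjk : j ≠ k) (hjl : j ≠ l) :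
    act R i j ∘ act S k l = act S k l ∘ act R i j := by
  funext f
  calc act R i j (act S k l f)
      = act R i j (Function.update (Function.update f k (S (f k, f l)).1) l (S (f k, f l)).2) :=
        rfl
    _ = Function.update (Function.update (act R i j f) k (S (f k, f l)).1) l
          (S (f k, f l)).2 := by
        rw [act_update_of_ne R hil.symm hjl.symm, act_update_of_ne R hik.symm hjk.symm]
    _ = act S k l (act R i j f) := by
        rw [← act_apply_of_ne R hik.symm hjk.symm f, ← act_apply_of_ne R hil.symm hjl.symm f]
        rfl

end Coordinates

section Triple

/-- The projection of a tuple onto its coordinates in positions `i`, `j`, `k`, in that order; it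
serves to compare the maps `act R i j` with the lifts of `R` to a triple product. -/
def triple {ι X : Type*} (i j k : ι) (f : ι → X) : X × X × X :=
  (f i, f j, f k)

theorem eq_of_triple_eq {ι X : Type*} {i j k : ι} {f g : ι → X}
    (htriple : triple i j k f = triple i j k g)
    (hrest : ∀ m, m ≠ i → m ≠ j → m ≠ k → f m = g m) : f = g := by
  simp only [triple, Prod.mk.injEq] at htriple
  obtain ⟨hi, hj, hk⟩ := htriple
  funext m
  by_cases hmi : m = i
  · rwa [hmi]
  by_cases hmj : m = j
  · rwa [hmj]
  by_cases hmk : m = k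
  · rwa [hmk]
  exact hrest m hmi hmj hmk

variable {X : Type*} {n : ℕ} (R : X × X → X × X) {i j k : Fin n}

theorem semiconj_triple_act_lift12 (hij : i ≠ j) (hik : i ≠ k) (hjk : j ≠ k) :
    Function.Semiconj (triple i j k) (act R i j) (lift12 R) := fun f => by
  simp only [triple, lift12, act_apply_left R hij, act_apply_right,
    act_apply_of_ne R hik.symm hjk.symm]

theorem semiconj_triple_act_lift13 (hij : i ≠ j) (hik : i ≠ k) (hjk : j ≠ k) :
    Function.Semiconj (triple i j k) (act R i k) (lift13 R) := fun f => by
  simp only [triple, lift13, act_apply_left R hik, act_apply_right,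
    act_apply_of_ne R hij.symm hjk]

theorem semiconj_triple_act_lift23 (hij : i ≠ j) (hik : i ≠ k) (hjk : j ≠ k) :
    Function.Semiconj (triple i j k) (act R j k) (lift23 R) := fun f => by
  simp only [triple, lift23, act_apply_left R hjk, act_apply_right, act_apply_of_ne R hij hik]

variable {R}

theorem IsYB.act_comp_act_comp_act (hYB : IsYB R) (hij : i ≠ j) (hik : i ≠ k) (hjk : j ≠ k) :
    act R i j ∘ act R i k ∘ act R j k = act R j k ∘ act R i k ∘ act R i j := by
  have h12 := semiconj_triple_act_lift12 R hij hik hjk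
  have h13 := semiconj_triple_act_lift13 R hij hik hjk
  have h23 := semiconj_triple_act_lift23 R hij hik hjk
  funext f
  apply eq_of_triple_eq (i := i) (j := j) (k := k)
  · calc triple i j k ((act R i j ∘ act R i k ∘ act R j k) f)
        = (lift12 R ∘ lift13 R ∘ lift23 R) (triple i j k f) :=
          h12.comp_right (h13.comp_right h23) f
      _ = (lift23 R ∘ lift13 R ∘ lift12 R) (triple i j k f) := congrFun hYB _
      _ = triple i j k ((act R j k ∘ act R i k ∘ act R i j) f) :=
          (h23.comp_right (h13.comp_right h12) f).symm
  · intro m hmi hmj hmk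
    simp only [Function.comp_apply, act_apply_of_ne R hmi hmj, act_apply_of_ne R hmi hmk,
      act_apply_of_ne R hmj hmk]

end Triple

theorem vpn_representation_general {X : Type*} {n : ℕ} {R : X × X → X × X} (hYB : IsYB R) :
    (∀ i j k l : Fin n, i ≠ j → i ≠ k → i ≠ l → j ≠ k → j ≠ l → k ≠ l →
      act R i j ∘ act R k l = act R k l ∘ act R i j) ∧
    (∀ i j k : Fin n, i ≠ j → i ≠ k → j ≠ k →
      act R k i ∘ act R k j ∘ act R i j = act R i j ∘ act R k j ∘ act R k i) :=
  ⟨fun _ _ _ _ _ hik hil hjk hjl _ => act_comp_act_comm R R hik hil hjk hjl,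
    fun _ _ _ hij hik hjk => hYB.act_comp_act_comp_act hik.symm hjk.symm hij⟩

/-- If `R : X × X → X × X` is a bijection satisfying the set-theoretic Yang–Baxter
equation and `n ≥ 2`, then the maps `R_{ij} : Xⁿ → Xⁿ` satisfy the defining relations
of the virtual pure braid group `VPₙ`:
`R_{ij} ∘ R_{kl} = R_{kl} ∘ R_{ij}` for pairwise distinct `i, j, k, l`, and
`R_{ki} ∘ R_{kj} ∘ R_{ij} = R_{ij} ∘ R_{kj} ∘ R_{ki}` for pairwise distinct `i, j, k`;
hence `λ_{ij} ↦ R_{ij}` defines a group homomorphism `VPₙ → Sym(Xⁿ)`. -/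
theorem vpn_representation {X : Type*} (n : ℕ) (hn : 2 ≤ n) (R : X × X → X × X)
    (hbij : Function.Bijective R) (hYB : IsYB R) :
    (∀ i j k l : Fin n, i ≠ j → i ≠ k → i ≠ l → j ≠ k → j ≠ l → k ≠ l →
      act R i j ∘ act R k l = act R k l ∘ act R i j) ∧
    (∀ i j k : Fin n, i ≠ j → i ≠ k → j ≠ k →
      act R k i ∘ act R k j ∘ act R i j = act R i j ∘ act R k j ∘ act R k i) :=
  vpn_representation_general hYB
end

section
/- Under the extension hypotheses on B, C, R^B, R^C, R, identify (B × C)² with B × C × B × C, with positions numbered 1, …, 4 (B in odd positions, C in even positions), and define 𝓡 : (B × C)² → (B × C)² by 𝓡 = R₄₁ ∘ R^B₁₃ ∘ R^C₂₄ ∘ R₂₃⁻¹. Then (B × C, 𝓡) is a Yang–Baxter set, i.e. 𝓡 satisfies the set-theoretic Yang–Baxter equation: 𝓡₁₂ ∘ 𝓡₁₃ ∘ 𝓡₂₃ = 𝓡₂₃ ∘ 𝓡₁₃ ∘ 𝓡₁₂ as maps on (B × C)³. -/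
/-- The 6-fold product `B × C × B × C × B × C`, positions numbered 1,…,6,
`B` in odd positions and `C` in even positions. -/
abbrev T6 (B C : Type*) := B × C × B × C × B × C

section Lifts

variable {B C : Type*}

/-- Apply `T` to the (B,B) coordinates in positions (1,3). -/
def eBB13 (T : B × B → B × B) : T6 B C → T6 B C :=
  fun (b1, c2, b3, c4, b5, c6) => ((T (b1, b3)).1, c2, (T (b1, b3)).2, c4, b5, c6)

/-- Apply `T` to the (B,B) coordinates in positions (1,5). -/
def eBB15 (T : B × B → B × B) : T6 B C → T6 B C :=
  fun (b1, c2, b3, c4, b5, c6) => ((T (b1, b5)).1, c2, b3, c4, (T (b1, b5)).2, c6)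

/-- Apply `T` to the (B,B) coordinates in positions (3,5). -/
def eBB35 (T : B × B → B × B) : T6 B C → T6 B C :=
  fun (b1, c2, b3, c4, b5, c6) => (b1, c2, (T (b3, b5)).1, c4, (T (b3, b5)).2, c6)

/-- Apply `T` to the (C,C) coordinates in positions (2,4). -/
def eCC24 (T : C × C → C × C) : T6 B C → T6 B C :=
  fun (b1, c2, b3, c4, b5, c6) => (b1, (T (c2, c4)).1, b3, (T (c2, c4)).2, b5, c6)

/-- Apply `T` to the (C,C) coordinates in positions (2,6). -/
def eCC26 (T : C × C → C × C) : T6 B C → T6 B C :=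
  fun (b1, c2, b3, c4, b5, c6) => (b1, (T (c2, c6)).1, b3, c4, b5, (T (c2, c6)).2)

/-- Apply `T` to the (C,C) coordinates in positions (4,6). -/
def eCC46 (T : C × C → C × C) : T6 B C → T6 B C :=
  fun (b1, c2, b3, c4, b5, c6) => (b1, c2, b3, (T (c4, c6)).1, b5, (T (c4, c6)).2)

/-- Apply `T` to the (C,B) coordinates in positions (2,3). -/
def eCB23 (T : C × B → C × B) : T6 B C → T6 B C :=
  fun (b1, c2, b3, c4, b5, c6) => (b1, (T (c2, b3)).1, (T (c2, b3)).2, c4, b5, c6)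

/-- Apply `T` to the (C,B) coordinates in positions (2,5). -/
def eCB25 (T : C × B → C × B) : T6 B C → T6 B C :=
  fun (b1, c2, b3, c4, b5, c6) => (b1, (T (c2, b5)).1, b3, c4, (T (c2, b5)).2, c6)

/-- Apply `T` to the (C,B) coordinates in positions (4,1). -/
def eCB41 (T : C × B → C × B) : T6 B C → T6 B C :=
  fun (b1, c2, b3, c4, b5, c6) => ((T (c4, b1)).2, c2, b3, (T (c4, b1)).1, b5, c6)

/-- Apply `T` to the (C,B) coordinates in positions (4,5). -/
def eCB45 (T : C × B → C × B) : T6 B C → T6 B C :=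
  fun (b1, c2, b3, c4, b5, c6) => (b1, c2, b3, (T (c4, b5)).1, (T (c4, b5)).2, c6)

/-- Apply `T` to the (C,B) coordinates in positions (6,1). -/
def eCB61 (T : C × B → C × B) : T6 B C → T6 B C :=
  fun (b1, c2, b3, c4, b5, c6) => ((T (c6, b1)).2, c2, b3, c4, b5, (T (c6, b1)).1)

/-- Apply `T` to the (C,B) coordinates in positions (6,3). -/
def eCB63 (T : C × B → C × B) : T6 B C → T6 B C :=
  fun (b1, c2, b3, c4, b5, c6) => (b1, c2, (T (c6, b3)).2, c4, b5, (T (c6, b3)).1)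

end Lifts

/-- The 4-fold product `B × C × B × C`, identified with `(B × C)²`,
positions numbered 1,…,4, `B` in odd positions and `C` in even positions. -/
abbrev T4 (B C : Type*) := B × C × B × C

section Lifts4

variable {B C : Type*}

/-- Apply `T : C × B → C × B` to the coordinates in positions (4,1) of `T4`. -/
def f41 (T : C × B → C × B) : T4 B C → T4 B C :=
  fun (b1, c2, b3, c4) => ((T (c4, b1)).2, c2, b3, (T (c4, b1)).1)

/-- Apply `T : B × B → B × B` to the coordinates in positions (1,3) of `T4`. -/
def fBB13 (T : B × B → B × B) : T4 B C → T4 B C :=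
  fun (b1, c2, b3, c4) => ((T (b1, b3)).1, c2, (T (b1, b3)).2, c4)

/-- Apply `T : C × C → C × C` to the coordinates in positions (2,4) of `T4`. -/
def fCC24 (T : C × C → C × C) : T4 B C → T4 B C :=
  fun (b1, c2, b3, c4) => (b1, (T (c2, c4)).1, b3, (T (c2, c4)).2)

/-- Apply `T : C × B → C × B` to the coordinates in positions (2,3) of `T4`. -/
def f23 (T : C × B → C × B) : T4 B C → T4 B C :=
  fun (b1, c2, b3, c4) => (b1, (T (c2, b3)).1, (T (c2, b3)).2, c4)

/-- Lift of a map on `(B × C)² = T4` to the pairs (1,2) of `(B × C)³ = T6`. -/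
def pair12 (F : T4 B C → T4 B C) : T6 B C → T6 B C :=
  fun (b1, c2, b3, c4, b5, c6) =>
    ((F (b1, c2, b3, c4)).1, (F (b1, c2, b3, c4)).2.1, (F (b1, c2, b3, c4)).2.2.1,
      (F (b1, c2, b3, c4)).2.2.2, b5, c6)

/-- Lift of a map on `(B × C)² = T4` to the pairs (1,3) of `(B × C)³ = T6`. -/
def pair13 (F : T4 B C → T4 B C) : T6 B C → T6 B C :=
  fun (b1, c2, b3, c4, b5, c6) =>
    ((F (b1, c2, b5, c6)).1, (F (b1, c2, b5, c6)).2.1, b3, c4,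
      (F (b1, c2, b5, c6)).2.2.1, (F (b1, c2, b5, c6)).2.2.2)

/-- Lift of a map on `(B × C)² = T4` to the pairs (2,3) of `(B × C)³ = T6`. -/
def pair23 (F : T4 B C → T4 B C) : T6 B C → T6 B C :=
  fun (b1, c2, b3, c4, b5, c6) =>
    (b1, c2, (F (b3, c4, b5, c6)).1, (F (b3, c4, b5, c6)).2.1,
      (F (b3, c4, b5, c6)).2.2.1, (F (b3, c4, b5, c6)).2.2.2)

end Lifts4

/-!
Colour the two factors of `B × C` and give each ordered pair of colours its own exchange map:
`R^B` and `R^C` for equal colours, `R⁻¹` for `(C, B)`, and `R` with its arguments exchanged for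
`(B, C)`. The two compatibility conditions on `R`, rewritten by moving copies of `R` across the
equation, are then the mixed Yang–Baxter equations for the six non-constant colour triples. A
mixed Yang–Baxter equation survives fusing two spaces in any one of its three slots, because
exchange maps on disjoint coordinates commute, even definitionally. Fusing `B` with `C` in each
slot in turn gives the Yang–Baxter equation for `𝓡`.
-/

section MixedYangBaxter

variable {X X₁ X₂ Y Y₁ Y₂ Z Z₁ Z₂ : Type*}

/-- The mixed Yang–Baxter equation `T₁₂ ∘ U₁₃ ∘ V₂₃ = V₂₃ ∘ U₁₃ ∘ T₁₂` on `X × Y × Z`, with a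
separate map for each pair of factors. `IsYB R` unfolds to `IsMixedYB R R R`. -/
def IsMixedYB (T : X × Y → X × Y) (U : X × Z → X × Z) (V : Y × Z → Y × Z) : Prop :=
  lift12 T ∘ lift13 U ∘ lift23 V = lift23 V ∘ lift13 U ∘ lift12 T

/-- The action of a map on `X₁ × Y` on `(X₁ × X₂) × Y`, with `X₂` as a spectator. -/
def onLeftFst (T : X₁ × Y → X₁ × Y) : (X₁ × X₂) × Y → (X₁ × X₂) × Y :=
  (Equiv.prodAssoc X₁ X₂ Y).symm ∘ lift13 T ∘ Equiv.prodAssoc X₁ X₂ Y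

/-- The action of a map on `X₂ × Y` on `(X₁ × X₂) × Y`, with `X₁` as a spectator. -/
def onLeftSnd (T : X₂ × Y → X₂ × Y) : (X₁ × X₂) × Y → (X₁ × X₂) × Y :=
  (Equiv.prodAssoc X₁ X₂ Y).symm ∘ lift23 T ∘ Equiv.prodAssoc X₁ X₂ Y

/-- Fusion of the left spaces of two exchange maps, used to build an exchange map of the product
`X₁ × X₂` with `Y`. The order of the two factors is opposite to that in `fuseRight`; the mixed
Yang–Baxter equation forces this when a middle space is fused. -/
def fuseLeft (T₁ : X₁ × Y → X₁ × Y) (T₂ : X₂ × Y → X₂ × Y) : (X₁ × X₂) × Y → (X₁ × X₂) × Y :=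
  onLeftFst T₁ ∘ onLeftSnd T₂

/-- Fusion of the right spaces of two exchange maps, used to build an exchange map of `X` with the
product `Y₁ × Y₂`. The map involving `Y₁` acts first. -/
def fuseRight (T₁ : X × Y₁ → X × Y₁) (T₂ : X × Y₂ → X × Y₂) : X × Y₁ × Y₂ → X × Y₁ × Y₂ :=
  lift13 T₂ ∘ lift12 T₁

namespace IsMixedYB

theorem adjoin_right_first {T : X₁ × Y → X₁ × Y} {U : X₁ × Z → X₁ × Z} {V : Y × Z → Y × Z}
    (h : IsMixedYB T U V) :
    IsMixedYB (onLeftFst (X₂ := X₂) T) (onLeftFst (X₂ := X₂) U) V :=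
  funext fun ⟨⟨x₁, x₂⟩, y, z⟩ =>
    congrArg (fun (x₁, y, z) => ((x₁, x₂), y, z)) (congrFun h (x₁, y, z))

theorem adjoin_left_first {T : X₂ × Y → X₂ × Y} {U : X₂ × Z → X₂ × Z} {V : Y × Z → Y × Z}
    (h : IsMixedYB T U V) :
    IsMixedYB (onLeftSnd (X₁ := X₁) T) (onLeftSnd (X₁ := X₁) U) V :=
  funext fun ⟨⟨x₁, x₂⟩, y, z⟩ =>
    congrArg (fun (x₂, y, z) => ((x₁, x₂), y, z)) (congrFun h (x₂, y, z))

theorem adjoin_right_second {T : X × Y₁ → X × Y₁} {U : X × Z → X × Z} {V : Y₁ × Z → Y₁ × Z}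
    (h : IsMixedYB T U V) :
    IsMixedYB (lift12 (Z := Y₂) T) U (onLeftFst (X₂ := Y₂) V) :=
  funext fun ⟨x, ⟨y₁, y₂⟩, z⟩ =>
    congrArg (fun (x, y₁, z) => (x, (y₁, y₂), z)) (congrFun h (x, y₁, z))

theorem adjoin_left_second {T : X × Y₂ → X × Y₂} {U : X × Z → X × Z} {V : Y₂ × Z → Y₂ × Z}
    (h : IsMixedYB T U V) :
    IsMixedYB (lift13 (Y := Y₁) T) U (onLeftSnd (X₁ := Y₁) V) :=
  funext fun ⟨x, ⟨y₁, y₂⟩, z⟩ =>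
    congrArg (fun (x, y₂, z) => (x, (y₁, y₂), z)) (congrFun h (x, y₂, z))

theorem adjoin_right_third {T : X × Y → X × Y} {U : X × Z₁ → X × Z₁} {V : Y × Z₁ → Y × Z₁}
    (h : IsMixedYB T U V) :
    IsMixedYB T (lift12 (Z := Z₂) U) (lift12 (Z := Z₂) V) :=
  funext fun ⟨x, y, z₁, z₂⟩ =>
    congrArg (fun (x, y, z₁) => (x, y, z₁, z₂)) (congrFun h (x, y, z₁))

theorem adjoin_left_third {T : X × Y → X × Y} {U : X × Z₂ → X × Z₂} {V : Y × Z₂ → Y × Z₂}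
    (h : IsMixedYB T U V) :
    IsMixedYB T (lift13 (Y := Z₁) U) (lift13 (Y := Z₁) V) :=
  funext fun ⟨x, y, z₁, z₂⟩ =>
    congrArg (fun (x, y, z₂) => (x, y, z₁, z₂)) (congrFun h (x, y, z₂))

theorem fuse_first {T₁ : X₁ × Y → X₁ × Y} {T₂ : X₂ × Y → X₂ × Y} {U₁ : X₁ × Z → X₁ × Z}
    {U₂ : X₂ × Z → X₂ × Z} {V : Y × Z → Y × Z}
    (h₁ : IsMixedYB T₁ U₁ V) (h₂ : IsMixedYB T₂ U₂ V) :
    IsMixedYB (fuseLeft T₁ T₂) (fuseLeft U₁ U₂) V := by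
  calc lift12 (fuseLeft T₁ T₂) ∘ lift13 (fuseLeft U₁ U₂) ∘ lift23 V
    _ = lift12 (onLeftFst T₁) ∘ lift13 (onLeftFst U₁) ∘
          (lift12 (onLeftSnd T₂) ∘ lift13 (onLeftSnd U₂) ∘ lift23 V) := rfl
    _ = (lift12 (onLeftFst T₁) ∘ lift13 (onLeftFst U₁) ∘ lift23 V) ∘
          lift13 (onLeftSnd U₂) ∘ lift12 (onLeftSnd T₂) := by rw [h₂.adjoin_left_first]; rfl
    _ = (lift23 V ∘ lift13 (onLeftFst U₁) ∘ lift12 (onLeftFst T₁)) ∘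
          lift13 (onLeftSnd U₂) ∘ lift12 (onLeftSnd T₂) := by rw [h₁.adjoin_right_first]
    _ = lift23 V ∘ lift13 (fuseLeft U₁ U₂) ∘ lift12 (fuseLeft T₁ T₂) := rfl

theorem fuse_second {T₁ : X × Y₁ → X × Y₁} {T₂ : X × Y₂ → X × Y₂} {U : X × Z → X × Z}
    {V₁ : Y₁ × Z → Y₁ × Z} {V₂ : Y₂ × Z → Y₂ × Z}
    (h₁ : IsMixedYB T₁ U V₁) (h₂ : IsMixedYB T₂ U V₂) :
    IsMixedYB (fuseRight T₁ T₂) U (fuseLeft V₁ V₂) := by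
  calc lift12 (fuseRight T₁ T₂) ∘ lift13 U ∘ lift23 (fuseLeft V₁ V₂)
    _ = lift12 (lift13 T₂) ∘ (lift12 (lift12 T₁) ∘ lift13 U ∘ lift23 (onLeftFst V₁)) ∘
          lift23 (onLeftSnd V₂) := rfl
    _ = lift12 (lift13 T₂) ∘ (lift23 (onLeftFst V₁) ∘ lift13 U ∘ lift12 (lift12 T₁)) ∘
          lift23 (onLeftSnd V₂) := by rw [h₁.adjoin_right_second]
    _ = lift23 (onLeftFst V₁) ∘ (lift12 (lift13 T₂) ∘ lift13 U ∘ lift23 (onLeftSnd V₂)) ∘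
          lift12 (lift12 T₁) := rfl
    _ = lift23 (onLeftFst V₁) ∘ (lift23 (onLeftSnd V₂) ∘ lift13 U ∘ lift12 (lift13 T₂)) ∘
          lift12 (lift12 T₁) := by rw [h₂.adjoin_left_second]
    _ = lift23 (fuseLeft V₁ V₂) ∘ lift13 U ∘ lift12 (fuseRight T₁ T₂) := rfl

theorem fuse_third {T : X × Y → X × Y} {U₁ : X × Z₁ → X × Z₁} {U₂ : X × Z₂ → X × Z₂}
    {V₁ : Y × Z₁ → Y × Z₁} {V₂ : Y × Z₂ → Y × Z₂}
    (h₁ : IsMixedYB T U₁ V₁) (h₂ : IsMixedYB T U₂ V₂) :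
    IsMixedYB T (fuseRight U₁ U₂) (fuseRight V₁ V₂) := by
  calc lift12 T ∘ lift13 (fuseRight U₁ U₂) ∘ lift23 (fuseRight V₁ V₂)
    _ = (lift12 T ∘ lift13 (lift13 U₂) ∘ lift23 (lift13 V₂)) ∘
          lift13 (lift12 U₁) ∘ lift23 (lift12 V₁) := rfl
    _ = lift23 (lift13 V₂) ∘ lift13 (lift13 U₂) ∘
          (lift12 T ∘ lift13 (lift12 U₁) ∘ lift23 (lift12 V₁)) := by rw [h₂.adjoin_left_third]; rfl
    _ = lift23 (lift13 V₂) ∘ lift13 (lift13 U₂) ∘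
          (lift23 (lift12 V₁) ∘ lift13 (lift12 U₁) ∘ lift12 T) := by rw [h₁.adjoin_right_third]
    _ = lift23 (fuseRight V₁ V₂) ∘ lift13 (fuseRight U₁ U₂) ∘ lift12 T := rfl

end IsMixedYB

end MixedYangBaxter

section InverseRelations

variable {X Y Z W : Type*}

theorem symm_comp_symm_comp_of_comp_comm {a b : W ≃ W} {f : W → W}
    (h : f ∘ a ∘ b = b ∘ a ∘ f) : a.symm ∘ b.symm ∘ f = f ∘ b.symm ∘ a.symm := by
  rw [Equiv.symm_comp_eq, Equiv.symm_comp_eq]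
  calc f = (f ∘ a ∘ b) ∘ b.symm ∘ a.symm := by ext; simp
    _ = b ∘ a ∘ f ∘ b.symm ∘ a.symm := by rw [h]; rfl

theorem symm_comp_comp_of_comp_comm {a b : W ≃ W} {f : W → W}
    (h : f ∘ a ∘ b = b ∘ a ∘ f) : b.symm ∘ f ∘ a = a ∘ f ∘ b.symm := by
  rw [Equiv.symm_comp_eq]
  calc f ∘ a = (f ∘ a ∘ b) ∘ b.symm := by ext; simp
    _ = b ∘ a ∘ f ∘ b.symm := by rw [h]; rfl

/-- `lift12` of a bijection, as a bijection. -/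
def lift12Equiv (e : X × Y ≃ X × Y) : X × Y × Z ≃ X × Y × Z where
  toFun := lift12 e
  invFun := lift12 e.symm
  left_inv _ := by simp [lift12]
  right_inv _ := by simp [lift12]

/-- `lift13` of a bijection, as a bijection. -/
def lift13Equiv (e : X × Z ≃ X × Z) : X × Y × Z ≃ X × Y × Z where
  toFun := lift13 e
  invFun := lift13 e.symm
  left_inv _ := by simp [lift13]
  right_inv _ := by simp [lift13]

/-- `lift23` of a bijection, as a bijection. -/
def lift23Equiv (e : Y × Z ≃ Y × Z) : X × Y × Z ≃ X × Y × Z where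
  toFun := lift23 e
  invFun := lift23 e.symm
  left_inv _ := by simp [lift23]
  right_inv _ := by simp [lift23]

end InverseRelations

section Compatibility

variable {B C : Type*}

/-- Compatibility of `R : C × B → C × B` with a map on the square of its right space `B`: the
first extension condition, on `C × B × B`. -/
def IsCompatibleRight (RB : B × B → B × B) (R : C × B → C × B) : Prop :=
  lift23 RB ∘ lift12 R ∘ lift13 R = lift13 R ∘ lift12 R ∘ lift23 RB

/-- Compatibility of `R : C × B → C × B` with a map on the square of its left space `C`: the
second extension condition, on `C × C × B`. -/
def IsCompatibleLeft (RC : C × C → C × C) (R : C × B → C × B) : Prop :=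
  lift12 RC ∘ lift23 R ∘ lift13 R = lift13 R ∘ lift23 R ∘ lift12 RC

/-- The map `B × C → B × C` obtained from a map `C × B → C × B` by exchanging the two arguments,
which turns an action in positions `(4, 1)` into one in positions `(1, 4)`. -/
def swapConj (S : C × B → C × B) : B × C → B × C :=
  Prod.swap ∘ S ∘ Prod.swap

namespace IsCompatibleRight

variable {RB : B × B → B × B} {R : C × B ≃ C × B}

theorem isMixedYB_swapConj_swapConj {S : C × B → C × B} (h : IsCompatibleRight RB S) :
    IsMixedYB RB (swapConj S) (swapConj S) :=
  funext fun (b, b', c) => congrArg (fun (c, b, b') => (b, b', c)) (congrFun h (c, b, b'))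

theorem isMixedYB_symm_symm (h : IsCompatibleRight RB R) : IsMixedYB R.symm R.symm RB :=
  symm_comp_symm_comp_of_comp_comm (a := lift12Equiv R) (b := lift13Equiv R) h

theorem isMixedYB_swapConj_symm (h : IsCompatibleRight RB R) :
    IsMixedYB (swapConj R) RB R.symm :=
  have hR := symm_comp_comp_of_comp_comm (a := lift12Equiv R) (b := lift13Equiv R) h
  funext fun (b, c, b') => congrArg (fun (c, b, b') => (b, c, b')) (congrFun hR (c, b, b')).symm

end IsCompatibleRight

namespace IsCompatibleLeft

variable {RC : C × C → C × C} {R : C × B ≃ C × B}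

theorem isMixedYB_swapConj_swapConj {S : C × B → C × B} (h : IsCompatibleLeft RC S) :
    IsMixedYB (swapConj S) (swapConj S) RC :=
  funext fun (b, c, c') => congrArg (fun (c, c', b) => (b, c, c')) (congrFun h (c, c', b)).symm

theorem isMixedYB_symm_symm (h : IsCompatibleLeft RC R) : IsMixedYB RC R.symm R.symm :=
  (symm_comp_symm_comp_of_comp_comm (a := lift23Equiv R) (b := lift13Equiv R) h).symm

theorem isMixedYB_symm_swapConj (h : IsCompatibleLeft RC R) :
    IsMixedYB R.symm RC (swapConj R) :=
  have hR := symm_comp_comp_of_comp_comm (a := lift23Equiv R) (b := lift13Equiv R) h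
  funext fun (c, b, c') => congrArg (fun (c, c', b) => (c, b, c')) (congrFun hR (c, c', b))

end IsCompatibleLeft

end Compatibility

section Extension

variable {B C : Type*}

/-- `S₄₁ ∘ R^B₁₃ ∘ R^C₂₄ ∘ Q₂₃` on `B × C × B × C`; the map `𝓡` of the theorem is the case
`S = R`, `Q = R⁻¹`. -/
def extensionMap (RB : B × B → B × B) (RC : C × C → C × C) (S Q : C × B → C × B) :
    T4 B C → T4 B C :=
  f41 S ∘ fBB13 RB ∘ fCC24 RC ∘ f23 Q

theorem extensionMap_eq_fuse (RB : B × B → B × B) (RC : C × C → C × C) (S Q : C × B → C × B) :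
    (Equiv.prodAssoc B C (B × C)).symm ∘ extensionMap RB RC S Q ∘ Equiv.prodAssoc B C (B × C) =
      fuseRight (fuseLeft RB Q) (fuseLeft (swapConj S) RC) :=
  rfl

theorem pair_comp_eq_of_isYB {F : T4 B C → T4 B C}
    (h : IsYB ((Equiv.prodAssoc B C (B × C)).symm ∘ F ∘ Equiv.prodAssoc B C (B × C))) :
    pair12 F ∘ pair13 F ∘ pair23 F = pair23 F ∘ pair13 F ∘ pair12 F :=
  funext fun (b1, c2, b3, c4, b5, c6) =>
    congrArg (fun ((b1, c2), (b3, c4), (b5, c6)) => (b1, c2, b3, c4, b5, c6))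
      (congrFun h ((b1, c2), (b3, c4), (b5, c6)))

theorem extension_YB_general {RB : B × B → B × B} {RC : C × C → C × C} {S Q : C × B → C × B}
    (hBBB : IsYB RB) (hCCC : IsYB RC)
    (hBBC : IsMixedYB RB (swapConj S) (swapConj S)) (hBCB : IsMixedYB (swapConj S) RB Q)
    (hCBB : IsMixedYB Q Q RB) (hBCC : IsMixedYB (swapConj S) (swapConj S) RC)
    (hCBC : IsMixedYB Q RC (swapConj S)) (hCCB : IsMixedYB RC Q Q) :
    pair12 (extensionMap RB RC S Q) ∘ pair13 (extensionMap RB RC S Q) ∘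
        pair23 (extensionMap RB RC S Q) =
      pair23 (extensionMap RB RC S Q) ∘ pair13 (extensionMap RB RC S Q) ∘
        pair12 (extensionMap RB RC S Q) := by
  apply pair_comp_eq_of_isYB
  rw [extensionMap_eq_fuse]
  have hB : IsMixedYB (fuseRight (fuseLeft RB Q) (fuseLeft (swapConj S) RC))
      (fuseLeft RB Q) (fuseLeft RB Q) :=
    (IsMixedYB.fuse_first hBBB hCBB).fuse_second (hBCB.fuse_first hCCB)
  have hC : IsMixedYB (fuseRight (fuseLeft RB Q) (fuseLeft (swapConj S) RC))
      (fuseLeft (swapConj S) RC) (fuseLeft (swapConj S) RC) :=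
    (hBBC.fuse_first hCBC).fuse_second (hBCC.fuse_first hCCC)
  exact hB.fuse_third hC

end Extension

/-- Theorem: under the extension hypotheses on `B, C, R^B, R^C, R`, the map
`𝓡 = R₄₁ ∘ R^B₁₃ ∘ R^C₂₄ ∘ R₂₃⁻¹` on `(B × C)² = B × C × B × C` satisfies the
set-theoretic Yang–Baxter equation, i.e. `(B × C, 𝓡)` is a Yang–Baxter set. -/
theorem extension_YB {B C : Type*} (RB : B × B → B × B) (RC : C × C → C × C)
    (hB : IsYB RB) (hC : IsYB RC) (R : C × B ≃ C × B)
    (hRB : lift23 (X := C) RB ∘ lift12 (Z := B) ⇑R ∘ lift13 (Y := B) ⇑R =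
      lift13 (Y := B) ⇑R ∘ lift12 (Z := B) ⇑R ∘ lift23 (X := C) RB)
    (hRC : lift12 (Z := B) RC ∘ lift23 (X := C) ⇑R ∘ lift13 (Y := C) ⇑R =
      lift13 (Y := C) ⇑R ∘ lift23 (X := C) ⇑R ∘ lift12 (Z := B) RC) :
    pair12 (f41 ⇑R ∘ fBB13 RB ∘ fCC24 RC ∘ f23 ⇑R.symm) ∘
        pair13 (f41 ⇑R ∘ fBB13 RB ∘ fCC24 RC ∘ f23 ⇑R.symm) ∘
        pair23 (f41 ⇑R ∘ fBB13 RB ∘ fCC24 RC ∘ f23 ⇑R.symm) =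
      pair23 (f41 ⇑R ∘ fBB13 RB ∘ fCC24 RC ∘ f23 ⇑R.symm) ∘
        pair13 (f41 ⇑R ∘ fBB13 RB ∘ fCC24 RC ∘ f23 ⇑R.symm) ∘
        pair12 (f41 ⇑R ∘ fBB13 RB ∘ fCC24 RC ∘ f23 ⇑R.symm) :=
  have hRight : IsCompatibleRight RB R := hRB
  have hLeft : IsCompatibleLeft RC R := hRC
  extension_YB_general hB hC
    hRight.isMixedYB_swapConj_swapConj hRight.isMixedYB_swapConj_symm hRight.isMixedYB_symm_symm
    hLeft.isMixedYB_swapConj_swapConj hLeft.isMixedYB_symm_swapConj hLeft.isMixedYB_symm_symm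
end

section
/- Under the extension hypotheses on B, C, R^B, R^C, R, with R^B and R^C bijections, let P denote the flip (x, y) ↦ (y, x), set S^B := P ∘ R^B, S^C := P ∘ R^C, and identify (B × C)³ with B × C × B × C × B × C (positions 1, …, 6, B in odd positions, C in even positions). Then the maps 𝓢₁₂ := R₂₃∘S^B₁₃∘S^C₂₄∘R₂₃⁻¹ and 𝓢₂₃ := R₄₅∘S^B₃₅∘S^C₄₆∘R₄₅⁻¹ satisfy the braid relation 𝓢₁₂ ∘ 𝓢₂₃ ∘ 𝓢₁₂ = 𝓢₂₃ ∘ 𝓢₁₂ ∘ 𝓢₂₃; that is, the map 𝓢 := R₂₃∘S^B₁₃∘S^C₂₄∘R₂₃⁻¹ on (B × C)² is a set-theoretic solution of the braid equation on B × C. -/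
section Twist

variable {B C : Type*}

/-- `𝓢₁₂ = R₂₃ ∘ S^B₁₃ ∘ S^C₂₄ ∘ R₂₃⁻¹` where `S^B = P ∘ R^B`, `S^C = P ∘ R^C`. -/
def calS12 (RB : B × B → B × B) (RC : C × C → C × C) (R : C × B ≃ C × B) :
    T6 B C → T6 B C :=
  eCB23 ⇑R ∘ eBB13 (Prod.swap ∘ RB) ∘ eCC24 (Prod.swap ∘ RC) ∘ eCB23 ⇑R.symm

/-- `𝓢₂₃ = R₄₅ ∘ S^B₃₅ ∘ S^C₄₆ ∘ R₄₅⁻¹`. -/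
def calS23 (RB : B × B → B × B) (RC : C × C → C × C) (R : C × B ≃ C × B) :
    T6 B C → T6 B C :=
  eCB45 ⇑R ∘ eBB35 (Prod.swap ∘ RB) ∘ eCC46 (Prod.swap ∘ RC) ∘ eCB45 ⇑R.symm

end Twist

/-!
The twist `R₂₃ ∘ R₄₅ ∘ R₂₅` conjugates `𝓢₁₂` and `𝓢₂₃` to the untwisted product braidings
`S^B₁₃ ∘ S^C₂₄` and `S^B₃₅ ∘ S^C₄₆`. After composing with flips, the compatibility of `R` with
`R^C` says that `S^C₂₄` commutes with `R₄₅ ∘ R₂₅`, so `𝓢₁₂` untwists; its compatibility with `R^B`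
says that `S^B₃₅` commutes with `R₂₃ ∘ R₂₅`, and since `R₂₃` and `R₄₅` commute, `𝓢₂₃` untwists by
the same twist. The untwisted maps act separately on `B³` and `C³`, where the braid relation is the
Yang–Baxter equation.
-/

section BraidRelation

variable {α β : Type*}

/-- The braid relation `s ∘ t ∘ s = t ∘ s ∘ t` between two self-maps of a type. -/
def BraidRelation (s t : α → α) : Prop :=
  s ∘ t ∘ s = t ∘ s ∘ t

theorem BraidRelation.prodMap {s t : α → α} {s' t' : β → β}
    (h : BraidRelation s t) (h' : BraidRelation s' t') :
    BraidRelation (Prod.map s s') (Prod.map t t') := by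
  simpa only [BraidRelation, Prod.map_comp_map] using congrArg₂ Prod.map h h'

theorem BraidRelation.of_semiconj {f : α → β} {s t : α → α} {s' t' : β → β}
    (h : BraidRelation s t) (hf : Function.Surjective f)
    (hs : Function.Semiconj f s s') (ht : Function.Semiconj f t t') :
    BraidRelation s' t' := by
  refine hf.injective_comp_right ?_
  calc (s' ∘ t' ∘ s') ∘ f
      = f ∘ s ∘ t ∘ s := (hs.comp_right (ht.comp_right hs)).comp_eq.symm
    _ = f ∘ t ∘ s ∘ t := congrArg (f ∘ ·) h
    _ = (t' ∘ s' ∘ t') ∘ f := (ht.comp_right (hs.comp_right ht)).comp_eq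

theorem semiconj_comp_comp_of_leftInverse {f : α → β} {g : β → α}
    (h : Function.LeftInverse g f) (s : α → α) :
    Function.Semiconj f s (f ∘ s ∘ g) :=
  fun x => congrArg (f ∘ s) (h x).symm

end BraidRelation

section Flip

variable {B C X : Type*}

/-- The set-theoretic braid equation `S₁₂ ∘ S₂₃ ∘ S₁₂ = S₂₃ ∘ S₁₂ ∘ S₂₃` on `X × X × X`. -/
def IsBraiding (S : X × X → X × X) : Prop :=
  BraidRelation (lift12 (Z := X) S) (lift23 (X := X) S)

theorem IsYB.isBraiding_swap_comp {T : X × X → X × X} (h : IsYB T) :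
    IsBraiding (Prod.swap ∘ T) :=
  -- The flips move to the left of either triple composite, where they reverse the coordinates.
  funext fun p => congrArg (fun (x, y, z) => (z, y, x)) (congrFun h.symm p)

theorem commute_lift12_swap_comp {T : C × C → C × C} {R : C × B → C × B}
    (h : lift12 (Z := B) T ∘ lift23 (X := C) R ∘ lift13 (Y := C) R =
      lift13 (Y := C) R ∘ lift23 (X := C) R ∘ lift12 (Z := B) T) :
    Function.Commute (lift23 (X := C) R ∘ lift13 (Y := C) R)
      (lift12 (Z := B) (Prod.swap ∘ T)) :=
  fun p => congrArg (fun (c, c', b) => (c', c, b)) (congrFun h.symm p)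

theorem commute_lift23_swap_comp {T : B × B → B × B} {R : C × B → C × B}
    (h : lift23 (X := C) T ∘ lift12 (Z := B) R ∘ lift13 (Y := B) R =
      lift13 (Y := B) R ∘ lift12 (Z := B) R ∘ lift23 (X := C) T) :
    Function.Commute (lift12 (Z := B) R ∘ lift13 (Y := B) R)
      (lift23 (X := C) (Prod.swap ∘ T)) :=
  fun p => congrArg (fun (c, b, b') => (c, b', b)) (congrFun h.symm p)

end Flip

section SixFold

variable {B C : Type*}

/-- The identification of `B³ × C³` with `(B × C)³`, under which maps of the `B`-coordinates and
maps of the `C`-coordinates become a single `Prod.map`. -/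
def interleave (B C : Type*) : (B × B × B) × (C × C × C) ≃ T6 B C where
  toFun := fun ((b1, b3, b5), (c2, c4, c6)) => (b1, c2, b3, c4, b5, c6)
  invFun := fun (b1, c2, b3, c4, b5, c6) => ((b1, b3, b5), (c2, c4, c6))
  left_inv _ := rfl
  right_inv _ := rfl

theorem IsBraiding.braidRelation_interleaved {S : B × B → B × B} {T : C × C → C × C}
    (hS : IsBraiding S) (hT : IsBraiding T) :
    BraidRelation (eBB13 S ∘ eCC24 T) (eBB35 S ∘ eCC46 T) :=
  (hS.prodMap hT).of_semiconj (interleave B C).surjective (fun _ => rfl) fun _ => rfl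

theorem leftInverse_eCB23 {T T' : C × B → C × B} (h : Function.LeftInverse T' T) :
    Function.LeftInverse (eCB23 T') (eCB23 T) :=
  fun (b1, c2, b3, c4, b5, c6) =>
    congrArg (fun (c, b) => (b1, c, b, c4, b5, c6)) (h (c2, b3))

theorem leftInverse_eCB25 {T T' : C × B → C × B} (h : Function.LeftInverse T' T) :
    Function.LeftInverse (eCB25 T') (eCB25 T) :=
  fun (b1, c2, b3, c4, b5, c6) =>
    congrArg (fun (c, b) => (b1, c, b3, c4, b, c6)) (h (c2, b5))

theorem leftInverse_eCB45 {T T' : C × B → C × B} (h : Function.LeftInverse T' T) :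
    Function.LeftInverse (eCB45 T') (eCB45 T) :=
  fun (b1, c2, b3, c4, b5, c6) =>
    congrArg (fun (c, b) => (b1, c2, b3, c, b, c6)) (h (c4, b5))

theorem commute_eCB45_comp_eCB25_eCC24 {R : C × B → C × B} {S : C × C → C × C}
    (h : Function.Commute (lift23 (X := C) R ∘ lift13 (Y := C) R) (lift12 (Z := B) S)) :
    Function.Commute (eCB45 R ∘ eCB25 R) (eCC24 S) :=
  fun (b1, c2, b3, c4, b5, c6) =>
    congrArg (fun (c, c', b) => (b1, c, b3, c', b, c6)) (h (c2, c4, b5))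

theorem commute_eCB23_comp_eCB25_eBB35 {R : C × B → C × B} {S : B × B → B × B}
    (h : Function.Commute (lift12 (Z := B) R ∘ lift13 (Y := B) R) (lift23 (X := C) S)) :
    Function.Commute (eCB23 R ∘ eCB25 R) (eBB35 S) :=
  fun (b1, c2, b3, c4, b5, c6) =>
    congrArg (fun (c, b, b') => (b1, c, b, c4, b', c6)) (h (c2, b3, b5))

theorem commute_eCB45_comp_eCB25_eBB13 (R : C × B → C × B) (S : B × B → B × B) :
    Function.Commute (eCB45 R ∘ eCB25 R) (eBB13 S) :=
  fun _ => rfl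

theorem commute_eCB23_comp_eCB25_eCC46 (R : C × B → C × B) (S : C × C → C × C) :
    Function.Commute (eCB23 R ∘ eCB25 R) (eCC46 S) :=
  fun _ => rfl

end SixFold

section Untwisting

variable {B C : Type*}

/-- The twist `R₂₃ ∘ R₄₅ ∘ R₂₅`, which conjugates the product braidings on `(B × C)³` to `𝓢₁₂` and
`𝓢₂₃`. -/
def twist (R : C × B → C × B) : T6 B C → T6 B C :=
  eCB23 R ∘ eCB45 R ∘ eCB25 R

theorem twist_eq_eCB45_comp (R : C × B → C × B) :
    twist R = eCB45 R ∘ eCB23 R ∘ eCB25 R :=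
  rfl

theorem twist_surjective (R : C × B ≃ C × B) : Function.Surjective (twist R) :=
  (leftInverse_eCB23 R.right_inv).surjective.comp <|
    (leftInverse_eCB45 R.right_inv).surjective.comp (leftInverse_eCB25 R.right_inv).surjective

theorem semiconj_twist_calS12 (RB : B × B → B × B) {RC : C × C → C × C} (R : C × B ≃ C × B)
    (hRC : lift12 (Z := B) RC ∘ lift23 (X := C) ⇑R ∘ lift13 (Y := C) ⇑R =
      lift13 (Y := C) ⇑R ∘ lift23 (X := C) ⇑R ∘ lift12 (Z := B) RC) :
    Function.Semiconj (twist R) (eBB13 (Prod.swap ∘ RB) ∘ eCC24 (Prod.swap ∘ RC))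
      (calS12 RB RC R) :=
  have commute_inner : Function.Commute (eCB45 R ∘ eCB25 R)
      (eBB13 (Prod.swap ∘ RB) ∘ eCC24 (Prod.swap ∘ RC)) :=
    (commute_eCB45_comp_eCB25_eBB13 R _).comp_right
      (commute_eCB45_comp_eCB25_eCC24 (commute_lift12_swap_comp hRC))
  (semiconj_comp_comp_of_leftInverse (leftInverse_eCB23 R.left_inv) _).comp_left
    commute_inner.semiconj

theorem semiconj_twist_calS23 {RB : B × B → B × B} (RC : C × C → C × C) (R : C × B ≃ C × B)
    (hRB : lift23 (X := C) RB ∘ lift12 (Z := B) ⇑R ∘ lift13 (Y := B) ⇑R =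
      lift13 (Y := B) ⇑R ∘ lift12 (Z := B) ⇑R ∘ lift23 (X := C) RB) :
    Function.Semiconj (twist R) (eBB35 (Prod.swap ∘ RB) ∘ eCC46 (Prod.swap ∘ RC))
      (calS23 RB RC R) := by
  have commute_inner : Function.Commute (eCB23 R ∘ eCB25 R)
      (eBB35 (Prod.swap ∘ RB) ∘ eCC46 (Prod.swap ∘ RC)) :=
    (commute_eCB23_comp_eCB25_eBB35 (commute_lift23_swap_comp hRB)).comp_right
      (commute_eCB23_comp_eCB25_eCC46 R _)
  rw [twist_eq_eCB45_comp]
  exact (semiconj_comp_comp_of_leftInverse (leftInverse_eCB45 R.left_inv) _).comp_left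
    commute_inner.semiconj

end Untwisting

theorem extension_braid_general {B C : Type*} (RB : B × B → B × B) (RC : C × C → C × C)
    (hB : IsYB RB) (hC : IsYB RC) (R : C × B ≃ C × B)
    (hRB : lift23 (X := C) RB ∘ lift12 (Z := B) ⇑R ∘ lift13 (Y := B) ⇑R =
      lift13 (Y := B) ⇑R ∘ lift12 (Z := B) ⇑R ∘ lift23 (X := C) RB)
    (hRC : lift12 (Z := B) RC ∘ lift23 (X := C) ⇑R ∘ lift13 (Y := C) ⇑R =
      lift13 (Y := C) ⇑R ∘ lift23 (X := C) ⇑R ∘ lift12 (Z := B) RC) :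
    calS12 RB RC R ∘ calS23 RB RC R ∘ calS12 RB RC R =
      calS23 RB RC R ∘ calS12 RB RC R ∘ calS23 RB RC R := by
  have untwisted : BraidRelation (eBB13 (Prod.swap ∘ RB) ∘ eCC24 (Prod.swap ∘ RC))
      (eBB35 (Prod.swap ∘ RB) ∘ eCC46 (Prod.swap ∘ RC)) :=
    hB.isBraiding_swap_comp.braidRelation_interleaved hC.isBraiding_swap_comp
  exact untwisted.of_semiconj (twist_surjective R)
    (semiconj_twist_calS12 RB R hRC) (semiconj_twist_calS23 RC R hRB)

/-- Under the extension hypotheses on `B, C, R^B, R^C, R`, with `R^B` and `R^C`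
bijections, the maps `𝓢₁₂ = R₂₃ ∘ S^B₁₃ ∘ S^C₂₄ ∘ R₂₃⁻¹` and
`𝓢₂₃ = R₄₅ ∘ S^B₃₅ ∘ S^C₄₆ ∘ R₄₅⁻¹` satisfy the braid relation
`𝓢₁₂ ∘ 𝓢₂₃ ∘ 𝓢₁₂ = 𝓢₂₃ ∘ 𝓢₁₂ ∘ 𝓢₂₃`; that is, `𝓢` is a set-theoretic solution of the
braid equation on `B × C`. -/
theorem extension_braid {B C : Type*} (RB : B × B → B × B) (RC : C × C → C × C)
    (hB : IsYB RB) (hC : IsYB RC)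
    (hBbij : Function.Bijective RB) (hCbij : Function.Bijective RC)
    (R : C × B ≃ C × B)
    (hRB : lift23 (X := C) RB ∘ lift12 (Z := B) ⇑R ∘ lift13 (Y := B) ⇑R =
      lift13 (Y := B) ⇑R ∘ lift12 (Z := B) ⇑R ∘ lift23 (X := C) RB)
    (hRC : lift12 (Z := B) RC ∘ lift23 (X := C) ⇑R ∘ lift13 (Y := C) ⇑R =
      lift13 (Y := C) ⇑R ∘ lift23 (X := C) ⇑R ∘ lift12 (Z := B) RC) :
    calS12 RB RC R ∘ calS23 RB RC R ∘ calS12 RB RC R =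
      calS23 RB RC R ∘ calS12 RB RC R ∘ calS23 RB RC R :=
  extension_braid_general RB RC hB hC R hRB hRC
end

section
/- Let G be a group containing elements λ_{ij}, one for each pair 1 ≤ i ≠ j ≤ 6, satisfying the defining relations of the virtual pure braid group VP₆: λ_{ij}λ_{kl} = λ_{kl}λ_{ij} whenever i, j, k, l are pairwise distinct, and λ_{ki}λ_{kj}λ_{ij} = λ_{ij}λ_{kj}λ_{ki} for pairwise distinct i, j, k. Then the elements N₁₂ := λ₁₄λ₁₃λ₂₄λ₃₂⁻¹, N₁₃ := λ₁₆λ₁₅λ₂₆λ₅₂⁻¹, N₂₃ := λ₃₆λ₃₅λ₄₆λ₅₄⁻¹ satisfy the Yang–Baxter relation N₁₂N₁₃N₂₃ = N₂₃N₁₃N₁₂. -/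
/-!
For a linear order on the strands put `R i j = λ i j` if `i < j` and `R i j = (λ j i)⁻¹` otherwise.
Inverting an outer factor of `x * y * z = z * y * x` gives a relation of the same shape, so `R`
again satisfies the virtual pure braid relations. Replacing every strand by a block of strands turns
each crossing into an ordered product of crossings, and the Yang–Baxter relation survives because
it can be fused one strand at a time. The `N`'s are the crossings of the blocks `1, 2`, `3, 4` and
`5, 6` for the order `1 < 3 < 5 < 2 < 4 < 6`.
-/

/-- The Yang–Baxter relation, for the crossings `x = R₁₂`, `y = R₁₃`, `z = R₂₃` of three strands. -/
def IsYangBaxter {M : Type*} [Mul M] (x y z : M) : Prop :=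
  x * y * z = z * y * x

namespace IsYangBaxter

section Mul

variable {M : Type*} [Mul M] {x y z : M}

protected theorem eq (h : IsYangBaxter x y z) : x * y * z = z * y * x :=
  h

protected theorem symm (h : IsYangBaxter x y z) : IsYangBaxter z y x :=
  h.eq.symm

end Mul

section Semigroup

variable {M : Type*} [Semigroup M] {x x' y y' z z' : M}

theorem mul_left_mul_middle (h : IsYangBaxter x y z) (h' : IsYangBaxter x' y' z)
    (hxy' : Commute x y') (hx'y : Commute x' y) : IsYangBaxter (x * x') (y * y') z :=
  calc x * x' * (y * y') * z
    _ = x * y * (x' * y' * z) := by rw [hx'y.mul_mul_mul_comm, mul_assoc]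
    _ = x * y * (z * y' * x') := by rw [h'.eq]
    _ = x * y * z * (y' * x') := by simp only [mul_assoc]
    _ = z * y * x * (y' * x') := by rw [h.eq]
    _ = z * (y * (x * y') * x') := by simp only [mul_assoc]
    _ = z * (y * y') * (x * x') := by simp only [hxy'.eq, mul_assoc]

theorem mul_middle_mul_right (h : IsYangBaxter x y z) (h' : IsYangBaxter x y' z')
    (hyz' : Commute y z') (hy'z : Commute y' z) : IsYangBaxter x (y * y') (z * z') :=
  (h.symm.mul_left_mul_middle h'.symm hy'z.symm hyz'.symm).symm

theorem mul_left_mul_right (h : IsYangBaxter x y z) (h' : IsYangBaxter x' y z')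
    (hxz' : Commute x z') (hx'z : Commute x' z) : IsYangBaxter (x' * x) y (z * z') :=
  calc x' * x * y * (z * z')
    _ = x' * (x * y * z) * z' := by simp only [mul_assoc]
    _ = x' * (z * y * x) * z' := by rw [h.eq]
    _ = x' * z * y * (x * z') := by simp only [mul_assoc]
    _ = z * (x' * y * z') * x := by simp only [hx'z.eq, hxz'.eq, mul_assoc]
    _ = z * (z' * y * x') * x := by rw [h'.eq]
    _ = z * z' * y * (x' * x) := by simp only [mul_assoc]

end Semigroup

section Group

variable {G : Type*} [Group G] {x y z : G}

theorem inv_left (h : IsYangBaxter x y z) : IsYangBaxter x⁻¹ z y :=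
  calc x⁻¹ * z * y
    _ = x⁻¹ * (z * y * x) * x⁻¹ := by group
    _ = x⁻¹ * (x * y * z) * x⁻¹ := by rw [h.eq]
    _ = y * z * x⁻¹ := by group

theorem inv_right (h : IsYangBaxter x y z) : IsYangBaxter y x z⁻¹ :=
  h.symm.inv_left.symm

end Group

end IsYangBaxter

/-- The defining relations of the virtual pure braid group on the strands `ι`. Only the entries of
`R` off the diagonal matter. -/
structure IsVirtualPureBraidFamily {ι M : Type*} [Mul M] (R : ι → ι → M) : Prop where
  commute {i j k l : ι} : [i, j, k, l].Nodup → Commute (R i j) (R k l)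
  isYangBaxter {i j k : ι} : [i, j, k].Nodup → IsYangBaxter (R i j) (R i k) (R j k)

/-- The crossing of strand `i` with strand `j` when every `lam j i` with `i < j` is replaced by
`(lam i j)⁻¹`, which makes the crossings `(i, j)` and `(j, i)` mutually inverse. -/
def orientedCrossing {ι G : Type*} [LinearOrder ι] [Group G] (lam : ι → ι → G) (i j : ι) : G :=
  if i < j then lam i j else (lam j i)⁻¹

section orientedCrossing

variable {ι G : Type*} [LinearOrder ι] [Group G] {lam : ι → ι → G} {i j k : ι}

theorem orientedCrossing_of_lt (h : i < j) : orientedCrossing lam i j = lam i j :=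
  if_pos h

theorem orientedCrossing_swap (h : i ≠ j) :
    orientedCrossing lam j i = (orientedCrossing lam i j)⁻¹ := by
  rcases h.lt_or_gt with h | h <;> simp [orientedCrossing, h, h.not_gt]

namespace IsVirtualPureBraidFamily

theorem commute_orientedCrossing (h : IsVirtualPureBraidFamily lam) {l : ι}
    (hnodup : [i, j, k, l].Nodup) :
    Commute (orientedCrossing lam i j) (orientedCrossing lam k l) := by
  unfold orientedCrossing
  split_ifs
  · exact h.commute hnodup
  · exact (h.commute (by grind)).inv_right
  · exact (h.commute (by grind)).inv_left
  · exact (h.commute (by grind)).inv_inv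

theorem isYangBaxter_orientedCrossing (h : IsVirtualPureBraidFamily lam)
    (hnodup : [i, j, k].Nodup) :
    IsYangBaxter (orientedCrossing lam i j) (orientedCrossing lam i k)
      (orientedCrossing lam j k) := by
  let P (i j k : ι) : Prop := IsYangBaxter (orientedCrossing lam i j) (orientedCrossing lam i k)
    (orientedCrossing lam j k)
  have of_lt {i j k : ι} (hij : i < j) (hjk : j < k) : P i j k := by
    simp only [P, orientedCrossing_of_lt, hij, hjk, hij.trans hjk]
    exact h.isYangBaxter (by grind)
  have swap_left {i j k : ι} (hij : i ≠ j) (hP : P i j k) : P j i k := by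
    simpa only [P, orientedCrossing_swap hij] using hP.inv_left
  have swap_right {i j k : ι} (hjk : j ≠ k) (hP : P i j k) : P i k j := by
    simpa only [P, orientedCrossing_swap hjk] using hP.inv_right
  obtain ⟨hij, hik, hjk⟩ : i ≠ j ∧ i ≠ k ∧ j ≠ k := by grind
  rcases hij.lt_or_gt with lij | lji <;> rcases hjk.lt_or_gt with ljk | lkj
  · exact of_lt lij ljk
  · rcases hik.lt_or_gt with lik | lki
    · exact swap_right hjk.symm (of_lt lik lkj)
    · exact swap_right hjk.symm (swap_left hik.symm (of_lt lki lij))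
  · rcases hik.lt_or_gt with lik | lki
    · exact swap_left hij.symm (of_lt lji lik)
    · exact swap_left hij.symm (swap_right hik.symm (of_lt ljk lki))
  · exact swap_left hij.symm (swap_right hik.symm (swap_left hjk.symm (of_lt lkj lji)))

theorem orientedCrossing (h : IsVirtualPureBraidFamily lam) :
    IsVirtualPureBraidFamily (orientedCrossing lam) :=
  ⟨h.commute_orientedCrossing, h.isYangBaxter_orientedCrossing⟩

end IsVirtualPureBraidFamily

end orientedCrossing

/-- The crossing of the block of strands `A` with the block of strands `B`. Each strand of `A`
meets the strands of `B` starting from the last one. -/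
def blockCrossing {ι M : Type*} [Monoid M] (R : ι → ι → M) (A B : List ι) : M :=
  (A.map fun a => (B.reverse.map (R a)).prod).prod

section blockCrossing

variable {ι M : Type*} [Monoid M] (R : ι → ι → M)

@[simp]
theorem blockCrossing_nil_left (B : List ι) : blockCrossing R [] B = 1 := rfl

@[simp]
theorem blockCrossing_nil_right (A : List ι) : blockCrossing R A [] = 1 := by
  simp [blockCrossing]

theorem blockCrossing_singleton_singleton (a b : ι) : blockCrossing R [a] [b] = R a b := by
  simp [blockCrossing]

theorem blockCrossing_cons_left (a : ι) (A B : List ι) :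
    blockCrossing R (a :: A) B = blockCrossing R [a] B * blockCrossing R A B := by
  simp [blockCrossing]

theorem blockCrossing_singleton_cons (a b : ι) (B : List ι) :
    blockCrossing R [a] (b :: B) = blockCrossing R [a] B * R a b := by
  simp [blockCrossing]

namespace IsVirtualPureBraidFamily

variable {R}

theorem commute_blockCrossing (h : IsVirtualPureBraidFamily R) {A B C D : List ι}
    (hnodup : (A ++ B ++ (C ++ D)).Nodup) :
    Commute (blockCrossing R A B) (blockCrossing R C D) := by
  simp only [blockCrossing]
  refine Commute.list_prod_left _ _ ?_
  refine List.forall_mem_map.2 fun a ha => Commute.list_prod_left _ _ ?_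
  refine List.forall_mem_map.2 fun b hb => Commute.list_prod_right _ _ ?_
  refine List.forall_mem_map.2 fun c hc => Commute.list_prod_right _ _ ?_
  refine List.forall_mem_map.2 fun d hd => h.commute (by grind)

theorem isYangBaxter_blockCrossing_singleton_singleton (h : IsVirtualPureBraidFamily R) {a b : ι}
    {C : List ι} (hnodup : (a :: b :: C).Nodup) :
    IsYangBaxter (R a b) (blockCrossing R [a] C) (blockCrossing R [b] C) := by
  induction C with
  | nil => simp [IsYangBaxter]
  | cons c C ih =>
    have hac : Commute (blockCrossing R [a] C) (R b c) := by
      rw [← blockCrossing_singleton_singleton R b c]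
      exact h.commute_blockCrossing (by grind)
    have hbc : Commute (R a c) (blockCrossing R [b] C) := by
      rw [← blockCrossing_singleton_singleton R a c]
      exact h.commute_blockCrossing (by grind)
    rw [blockCrossing_singleton_cons, blockCrossing_singleton_cons]
    exact (ih (by grind)).mul_middle_mul_right (h.isYangBaxter (by grind)) hac hbc

theorem isYangBaxter_blockCrossing_singleton (h : IsVirtualPureBraidFamily R) {a : ι}
    {B C : List ι} (hnodup : (a :: (B ++ C)).Nodup) :
    IsYangBaxter (blockCrossing R [a] B) (blockCrossing R [a] C) (blockCrossing R B C) := by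
  induction B with
  | nil => simp [IsYangBaxter]
  | cons b B ih =>
    have hab : Commute (R a b) (blockCrossing R B C) := by
      rw [← blockCrossing_singleton_singleton R a b]
      exact h.commute_blockCrossing (by grind)
    have haB : Commute (blockCrossing R [a] B) (blockCrossing R [b] C) :=
      h.commute_blockCrossing (by grind)
    rw [blockCrossing_singleton_cons, blockCrossing_cons_left R b]
    exact (h.isYangBaxter_blockCrossing_singleton_singleton (by grind)).mul_left_mul_right
      (ih (by grind)) hab haB

theorem isYangBaxter_blockCrossing (h : IsVirtualPureBraidFamily R) {A B C : List ι}
    (hnodup : (A ++ B ++ C).Nodup) :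
    IsYangBaxter (blockCrossing R A B) (blockCrossing R A C) (blockCrossing R B C) := by
  induction A with
  | nil => simp [IsYangBaxter]
  | cons a A ih =>
    have haB : Commute (blockCrossing R [a] B) (blockCrossing R A C) :=
      h.commute_blockCrossing (by grind)
    have hAB : Commute (blockCrossing R A B) (blockCrossing R [a] C) :=
      h.commute_blockCrossing (by grind)
    rw [blockCrossing_cons_left R a A B, blockCrossing_cons_left R a A C]
    exact (h.isYangBaxter_blockCrossing_singleton (by grind)).mul_left_mul_middle
      (ih (by grind)) haB hAB

end IsVirtualPureBraidFamily

end blockCrossing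

theorem isVirtualPureBraidFamily_comp_of_injective {κ M : Type*} [Mul M] {n : ℕ} {lam : ℕ → ℕ → M}
    (hcomm : ∀ i j k m : ℕ, 1 ≤ i → i ≤ n → 1 ≤ j → j ≤ n → 1 ≤ k → k ≤ n →
      1 ≤ m → m ≤ n → i ≠ j → i ≠ k → i ≠ m → j ≠ k → j ≠ m → k ≠ m →
      lam i j * lam k m = lam k m * lam i j)
    (hyb : ∀ i j k : ℕ, 1 ≤ i → i ≤ n → 1 ≤ j → j ≤ n → 1 ≤ k → k ≤ n →
      i ≠ j → i ≠ k → j ≠ k →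
      lam k i * lam k j * lam i j = lam i j * lam k j * lam k i)
    {e : κ → ℕ} (he : e.Injective) (hmem : ∀ i, e i ∈ Set.Icc 1 n) :
    IsVirtualPureBraidFamily fun i j => lam (e i) (e j) where
  commute {i j k l} hnodup := by
    apply hcomm <;> grind [Function.Injective]
  isYangBaxter {i j k} hnodup := by
    apply hyb <;> grind [Function.Injective]

theorem N_YB_general {ι G : Type*} [LinearOrder ι] [Group G] {lam : ι → ι → G}
    (h : IsVirtualPureBraidFamily lam) {A B C : List ι} (hnodup : (A ++ B ++ C).Nodup) :
    IsYangBaxter (blockCrossing (orientedCrossing lam) A B)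
      (blockCrossing (orientedCrossing lam) A C) (blockCrossing (orientedCrossing lam) B C) :=
  h.orientedCrossing.isYangBaxter_blockCrossing hnodup

/-- If a group `G` contains elements `λ_{ij}` (`1 ≤ i ≠ j ≤ 6`) satisfying the defining
relations of the virtual pure braid group `VP₆`, then the elements
`N₁₂ := λ₁₄λ₁₃λ₂₄λ₃₂⁻¹`, `N₁₃ := λ₁₆λ₁₅λ₂₆λ₅₂⁻¹`, `N₂₃ := λ₃₆λ₃₅λ₄₆λ₅₄⁻¹` satisfy the
Yang–Baxter relation `N₁₂N₁₃N₂₃ = N₂₃N₁₃N₁₂`. -/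
theorem N_YB {G : Type*} [Group G] (lam : ℕ → ℕ → G)
    (hcomm : ∀ i j k m : ℕ, 1 ≤ i → i ≤ 6 → 1 ≤ j → j ≤ 6 → 1 ≤ k → k ≤ 6 →
      1 ≤ m → m ≤ 6 → i ≠ j → i ≠ k → i ≠ m → j ≠ k → j ≠ m → k ≠ m →
      lam i j * lam k m = lam k m * lam i j)
    (hyb : ∀ i j k : ℕ, 1 ≤ i → i ≤ 6 → 1 ≤ j → j ≤ 6 → 1 ≤ k → k ≤ 6 →
      i ≠ j → i ≠ k → j ≠ k →
      lam k i * lam k j * lam i j = lam i j * lam k j * lam k i) :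
    (lam 1 4 * lam 1 3 * lam 2 4 * (lam 3 2)⁻¹) *
        (lam 1 6 * lam 1 5 * lam 2 6 * (lam 5 2)⁻¹) *
        (lam 3 6 * lam 3 5 * lam 4 6 * (lam 5 4)⁻¹) =
      (lam 3 6 * lam 3 5 * lam 4 6 * (lam 5 4)⁻¹) *
        (lam 1 6 * lam 1 5 * lam 2 6 * (lam 5 2)⁻¹) *
        (lam 1 4 * lam 1 3 * lam 2 4 * (lam 3 2)⁻¹) := by
  let strand : Fin 6 → ℕ := ![1, 3, 5, 2, 4, 6]
  have hlam : IsVirtualPureBraidFamily fun i j => lam (strand i) (strand j) :=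
    isVirtualPureBraidFamily_comp_of_injective hcomm hyb (by decide) (by decide)
  -- `[0, 3]`, `[1, 4]`, `[2, 5]` are the positions of `1, 2`, `3, 4`, `5, 6` in `strand`.
  have key := N_YB_general hlam (A := [0, 3]) (B := [1, 4]) (C := [2, 5]) (by decide)
  simpa [IsYangBaxter, blockCrossing, orientedCrossing, strand, mul_assoc] using key
end

section
/- Let n ≥ 2 and let G be a group containing elements s₁, …, s_{2n−1} satisfying the braid relations sᵢs_{i+1}sᵢ = s_{i+1}sᵢs_{i+1} for 1 ≤ i ≤ 2n−2 and sᵢsⱼ = sⱼsᵢ for |i−j| ≥ 2. Then the doubled elements tᵢ := s_{2i}s_{2i+1}s_{2i−1}s_{2i}, for 1 ≤ i ≤ n−1, again satisfy the braid relations: tᵢt_{i+1}tᵢ = t_{i+1}tᵢt_{i+1} for 1 ≤ i ≤ n−2, and tᵢtⱼ = tⱼtᵢ for |i−j| ≥ 2. Consequently the doubling map Dₙ : Bₙ → B_{2n}, σᵢ ↦ σ_{2i}σ_{2i+1}σ_{2i−1}σ_{2i}, is a group homomorphism of braid groups. -/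
/-- The doubled element `tᵢ = s_{2i} s_{2i+1} s_{2i−1} s_{2i}`. -/
def doubled {G : Type*} [Group G] (s : ℕ → G) (i : ℕ) : G :=
  s (2 * i) * s (2 * i + 1) * s (2 * i - 1) * s (2 * i)

/-!
The braid relation `a b a = b a b` says that `a b` conjugates `a` to `b`. For consecutive braid
generators `a, b, c, d, e`, put `A = b c a b` and `B = d e c d`. Composing such conjugations shows
that `A B` conjugates `a, b, c` to `c, d, e`. It therefore conjugates `A` to `B`, which is the
braid relation between `A` and `B`.
-/

section Semigroup

variable {M : Type*} [Semigroup M] {a b c d e x : M}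

/-- The braid relation `a b a = b a b` between two elements, as satisfied by adjacent generators
of a braid group. -/
def BraidRel (a b : M) : Prop :=
  a * b * a = b * a * b

theorem braidRel_iff_semiconjBy : BraidRel a b ↔ SemiconjBy (a * b) a b := by
  rw [BraidRel, SemiconjBy, mul_assoc b]

theorem BraidRel.semiconjBy (h : BraidRel a b) : SemiconjBy (a * b) a b :=
  braidRel_iff_semiconjBy.1 h

/-- The crossing of two doubled strands, where `a, b, c` are the three consecutive braid
generators on these four strands. -/
def doubledCrossing (a b c : M) : M :=
  b * c * a * b

theorem commute_doubledCrossing (ha : Commute x a) (hb : Commute x b) (hc : Commute x c) :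
    Commute x (doubledCrossing a b c) :=
  ((hb.mul_right hc).mul_right ha).mul_right hb

theorem semiconjBy_doubledCrossing (hab : BraidRel a b) (hbc : BraidRel b c) :
    SemiconjBy (doubledCrossing a b c) a c := by
  rw [doubledCrossing, mul_assoc]
  exact hbc.semiconjBy.mul_left hab.semiconjBy

theorem doubledCrossing_mul_doubledCrossing (had : Commute a d) (hbd : Commute b d)
    (hbe : Commute b e) :
    doubledCrossing a b c * doubledCrossing c d e = b * c * d * (a * e) * (b * c * d) :=
  calc b * c * a * b * (d * e * c * d)
    _ = b * c * a * (b * (d * e)) * (c * d) := by simp only [mul_assoc]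
    _ = b * c * (a * d) * e * b * (c * d) := by
      rw [(hbd.mul_right hbe).eq]; simp only [mul_assoc]
    _ = b * c * d * (a * e) * (b * c * d) := by rw [had.eq]; simp only [mul_assoc]

theorem semiconjBy_doubledCrossing_mul_doubledCrossing (hbc : BraidRel b c) (hcd : BraidRel c d)
    (hac : Commute a c) (had : Commute a d) (hbd : Commute b d) (hbe : Commute b e)
    (hce : Commute c e) :
    SemiconjBy (doubledCrossing a b c * doubledCrossing c d e) b d := by
  have b_to_c : SemiconjBy (b * c * d) b c := hbc.semiconjBy.mul_left hbd.symm
  have c_to_c : SemiconjBy (a * e) c c := hac.mul_left hce.symm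
  have c_to_d : SemiconjBy (b * c * d) c d := by
    rw [mul_assoc]
    exact SemiconjBy.mul_left hbd hcd.semiconjBy
  rw [doubledCrossing_mul_doubledCrossing had hbd hbe]
  exact (c_to_d.mul_left c_to_c).mul_left b_to_c

theorem braidRel_doubledCrossing (hab : BraidRel a b) (hbc : BraidRel b c) (hcd : BraidRel c d)
    (hde : BraidRel d e) (hac : Commute a c) (had : Commute a d) (hae : Commute a e)
    (hbd : Commute b d) (hbe : Commute b e) (hce : Commute c e) :
    BraidRel (doubledCrossing a b c) (doubledCrossing c d e) := by
  have a_to_c : SemiconjBy (doubledCrossing a b c * doubledCrossing c d e) a c :=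
    (semiconjBy_doubledCrossing hab hbc).mul_left (commute_doubledCrossing hac had hae).symm
  have b_to_d : SemiconjBy (doubledCrossing a b c * doubledCrossing c d e) b d :=
    semiconjBy_doubledCrossing_mul_doubledCrossing hbc hcd hac had hbd hbe hce
  have c_to_e : SemiconjBy (doubledCrossing a b c * doubledCrossing c d e) c e :=
    SemiconjBy.mul_left (commute_doubledCrossing hae.symm hbe.symm hce.symm).symm
      (semiconjBy_doubledCrossing hcd hde)
  exact braidRel_iff_semiconjBy.2 (((b_to_d.mul_right c_to_e).mul_right a_to_c).mul_right b_to_d)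

/-- The elements `s 1, …, s (m - 1)` satisfy the defining relations of the braid group on `m`
strands; the other values of `s` are unconstrained. -/
structure IsBraidSequence (m : ℕ) (s : ℕ → M) : Prop where
  braidRel : ∀ i : ℕ, 1 ≤ i → i + 1 ≤ m - 1 → BraidRel (s i) (s (i + 1))
  commute : ∀ i j : ℕ, 1 ≤ i → i ≤ m - 1 → 1 ≤ j → j ≤ m - 1 → i + 2 ≤ j ∨ j + 2 ≤ i →
    Commute (s i) (s j)

theorem doubling_braid_general {n : ℕ} {s : ℕ → M} (hs : IsBraidSequence (2 * n) s) :
    IsBraidSequence n fun i ↦ doubledCrossing (s (2 * i - 1)) (s (2 * i)) (s (2 * i + 1)) where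
  braidRel i hi hin := by
    obtain ⟨k, rfl⟩ := Nat.exists_eq_add_of_le' hi
    have far (p q : ℕ) (hp : 2 * k + 1 ≤ p) (hpq : p + 2 ≤ q) (hq : q ≤ 2 * k + 5) :
        Commute (s p) (s q) :=
      hs.commute p q (by lia) (by lia) (by lia) (by lia) (.inl hpq)
    have adjacent (p : ℕ) (hp : 2 * k + 1 ≤ p) (hp' : p ≤ 2 * k + 4) :
        BraidRel (s p) (s (p + 1)) :=
      hs.braidRel p (by lia) (by lia)
    apply braidRel_doubledCrossing (c := s (2 * k + 3))
    case hab | hbc | hcd | hde => apply adjacent <;> lia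
    all_goals apply far <;> lia
  commute i j hi hin hj hjn hij := by
    have far (p q : ℕ) (hp : 2 * i - 1 ≤ p) (hp' : p ≤ 2 * i + 1) (hq : 2 * j - 1 ≤ q)
        (hq' : q ≤ 2 * j + 1) : Commute (s q) (s p) :=
      hs.commute q p (by lia) (by lia) (by lia) (by lia) (by lia)
    have hdoubled (q : ℕ) (hq : 2 * j - 1 ≤ q) (hq' : q ≤ 2 * j + 1) :
        Commute (doubledCrossing (s (2 * i - 1)) (s (2 * i)) (s (2 * i + 1))) (s q) := by
      apply Commute.symm
      apply commute_doubledCrossing <;> apply far <;> lia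
    apply commute_doubledCrossing <;> apply hdoubled <;> lia

end Semigroup

/-- If `n ≥ 2` and a group `G` contains elements `s₁, …, s_{2n−1}` satisfying the braid
relations, then the doubled elements `tᵢ = s_{2i}s_{2i+1}s_{2i−1}s_{2i}` (`1 ≤ i ≤ n−1`)
again satisfy the braid relations; consequently the doubling map
`Dₙ : Bₙ → B_{2n}`, `σᵢ ↦ σ_{2i}σ_{2i+1}σ_{2i−1}σ_{2i}`, is a group homomorphism of
braid groups. -/
theorem doubling_braid {G : Type*} [Group G] (n : ℕ) (hn : 2 ≤ n) (s : ℕ → G)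
    (hbr : ∀ i : ℕ, 1 ≤ i → i + 1 ≤ 2 * n - 1 →
      s i * s (i + 1) * s i = s (i + 1) * s i * s (i + 1))
    (hcomm : ∀ i j : ℕ, 1 ≤ i → i ≤ 2 * n - 1 → 1 ≤ j → j ≤ 2 * n - 1 →
      i + 2 ≤ j ∨ j + 2 ≤ i → s i * s j = s j * s i) :
    (∀ i : ℕ, 1 ≤ i → i + 1 ≤ n - 1 →
      doubled s i * doubled s (i + 1) * doubled s i =
        doubled s (i + 1) * doubled s i * doubled s (i + 1)) ∧
    (∀ i j : ℕ, 1 ≤ i → i ≤ n - 1 → 1 ≤ j → j ≤ n - 1 → i + 2 ≤ j ∨ j + 2 ≤ i →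
      doubled s i * doubled s j = doubled s j * doubled s i) :=
  have ht := doubling_braid_general (n := n) (s := s) ⟨hbr, hcomm⟩
  ⟨ht.braidRel, ht.commute⟩
end

section
/- Let G be a group containing elements λ_{ij}, one for each pair 1 ≤ i < j ≤ 6, satisfying the defining relations of VP₆⁺: λ_{ij}λ_{kl} = λ_{kl}λ_{ij} whenever i, j, k, l are pairwise distinct, and λ_{ij}λ_{ik}λ_{jk} = λ_{jk}λ_{ik}λ_{ij} for i < j < k. Then the elements M₁₂ := λ₁₄λ₁₃λ₂₄λ₂₃, M₁₃ := λ₁₆λ₁₅λ₂₆λ₂₅, M₂₃ := λ₃₆λ₃₅λ₄₆λ₄₅ satisfy the Yang–Baxter relation M₁₂M₁₃M₂₃ = M₂₃M₁₃M₁₂. -/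
/-!
Doubling one strand of a Yang–Baxter relation gives a Yang–Baxter relation again, because the
crossings of the two copies with different strands commute. Replacing each of three strands by a
bundle of parallel strands is repeated doubling, so `VP₃⁺` maps to `VPₙ⁺` for every way of cutting
the `n` strands into three consecutive bundles. The theorem is the case of three bundles of two.
-/

/-- The Yang–Baxter relation on a triple of elements, with `a`, `b`, `c` in the roles of the
generators `λ₁₂`, `λ₁₃`, `λ₂₃` of `VP₃⁺`. -/
def YangBaxter {M : Type*} [Mul M] (a b c : M) : Prop :=
  a * b * c = c * b * a

namespace YangBaxter

theorem symm {M : Type*} [Mul M] {a b c : M} (h : YangBaxter a b c) : YangBaxter c b a :=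
  Eq.symm h

variable {M : Type*} [Semigroup M]

theorem double_first {a₁ a₂ b₁ b₂ c : M} (h₁ : YangBaxter a₁ b₁ c) (h₂ : YangBaxter a₂ b₂ c)
    (h₂₁ : Commute a₂ b₁) (h₁₂ : Commute a₁ b₂) : YangBaxter (a₁ * a₂) (b₁ * b₂) c :=
  calc
    a₁ * a₂ * (b₁ * b₂) * c
      = a₁ * (a₂ * b₁) * b₂ * c := by simp only [mul_assoc]
    _ = a₁ * b₁ * (a₂ * b₂ * c) := by rw [h₂₁.eq]; simp only [mul_assoc]
    _ = a₁ * b₁ * c * b₂ * a₂ := by rw [h₂]; simp only [mul_assoc]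
    _ = c * b₁ * (a₁ * b₂) * a₂ := by rw [h₁]; simp only [mul_assoc]
    _ = c * (b₁ * b₂) * (a₁ * a₂) := by rw [h₁₂.eq]; simp only [mul_assoc]

theorem double_second {a₁ a₂ b c₁ c₂ : M} (h₁ : YangBaxter a₁ b c₂) (h₂ : YangBaxter a₂ b c₁)
    (h₁₁ : Commute a₁ c₁) (h₂₂ : Commute a₂ c₂) : YangBaxter (a₁ * a₂) b (c₁ * c₂) :=
  calc
    a₁ * a₂ * b * (c₁ * c₂)
      = a₁ * (a₂ * b * c₁) * c₂ := by simp only [mul_assoc]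
    _ = a₁ * c₁ * b * (a₂ * c₂) := by rw [h₂]; simp only [mul_assoc]
    _ = c₁ * (a₁ * b * c₂) * a₂ := by rw [h₁₁.eq, h₂₂.eq]; simp only [mul_assoc]
    _ = c₁ * c₂ * b * (a₁ * a₂) := by rw [h₁]; simp only [mul_assoc]

theorem double_third {a b₁ b₂ c₁ c₂ : M} (h₁ : YangBaxter a b₁ c₁) (h₂ : YangBaxter a b₂ c₂)
    (h₂₁ : Commute b₂ c₁) (h₁₂ : Commute b₁ c₂) : YangBaxter a (b₁ * b₂) (c₁ * c₂) :=
  (double_first h₁.symm h₂.symm h₁₂.symm h₂₁.symm).symm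

end YangBaxter

/-- The defining relations of `VPₙ⁺` for a family `lam i j`, with the strands `1, …, n` replaced by
an arbitrary preordered type. The values `lam i j` without `i < j` are unconstrained. -/
structure VPRelations {ι M : Type*} [Preorder ι] [Mul M] (lam : ι → ι → M) : Prop where
  commute {i j k m : ι} : i < j → k < m → i ≠ k → i ≠ m → j ≠ k → j ≠ m →
    Commute (lam i j) (lam k m)
  yangBaxter {i j k : ι} : i < j → j < k → YangBaxter (lam i j) (lam i k) (lam j k)

/-- The crossing of a bundle `s` of parallel strands with a bundle `t`: the product of all `lam i j`
with `i` running through `s` and, for each `i`, with `j` running through `t` backwards. For example,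
`M₁₂ = λ₁₄λ₁₃λ₂₄λ₂₃` is `cable lam [1, 2] [3, 4]`. One index has to run backwards because the copies
of the middle strand occur in opposite orders in the outer factors of `YangBaxter.double_second`. -/
def cable {ι M : Type*} [Monoid M] (lam : ι → ι → M) (s t : List ι) : M :=
  (s.map fun i ↦ (t.reverse.map (lam i)).prod).prod

section Cable

variable {ι M : Type*} [Monoid M]

@[simp]
theorem cable_nil_left (lam : ι → ι → M) (t : List ι) : cable lam [] t = 1 := rfl

@[simp]
theorem cable_nil_right (lam : ι → ι → M) (s : List ι) : cable lam s [] = 1 := by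
  simp [cable]

@[simp]
theorem cable_singleton (lam : ι → ι → M) (i j : ι) : cable lam [i] [j] = lam i j := by
  simp [cable]

theorem cable_cons_left (lam : ι → ι → M) (i : ι) (s t : List ι) :
    cable lam (i :: s) t = cable lam [i] t * cable lam s t := by
  simp [cable]

theorem cable_singleton_cons (lam : ι → ι → M) (i j : ι) (t : List ι) :
    cable lam [i] (j :: t) = cable lam [i] t * lam i j := by
  simp [cable]

end Cable

namespace VPRelations

variable {ι M : Type*} [Preorder ι] [Monoid M] {lam : ι → ι → M} {s t s' t' : List ι} {j k : ι}

theorem commute_cable (h : VPRelations lam)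
    (hst : ∀ i ∈ s, ∀ j ∈ t, i < j) (hst' : ∀ i ∈ s', ∀ j ∈ t', i < j)
    (hdisj : ∀ a ∈ s ++ t, ∀ b ∈ s' ++ t', a ≠ b) :
    Commute (cable lam s t) (cable lam s' t') := by
  have h_crossing : ∀ i ∈ s, ∀ j ∈ t, ∀ k ∈ s', ∀ m ∈ t', Commute (lam i j) (lam k m) := by
    intro i hi j hj k hk m hm
    apply h.commute (hst i hi j hj) (hst' k hk m hm) <;> apply hdisj <;> simp [*]
  refine Commute.list_prod_left _ _ (List.forall_mem_map.2 fun i hi ↦ ?_)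
  refine Commute.list_prod_left _ _ (List.forall_mem_map.2 fun j hj ↦ ?_)
  refine Commute.list_prod_right _ _ (List.forall_mem_map.2 fun k hk ↦ ?_)
  refine Commute.list_prod_right _ _ (List.forall_mem_map.2 fun m hm ↦ ?_)
  exact h_crossing i hi j (List.mem_reverse.1 hj) k hk m (List.mem_reverse.1 hm)

theorem cable_cons_right (h : VPRelations lam) (hs : (s ++ j :: t).Pairwise (· < ·)) :
    cable lam s (j :: t) = cable lam s t * cable lam s [j] := by
  induction s with
  | nil => simp
  | cons i s ih =>
    have h_comm : Commute (lam i j) (cable lam s t) := by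
      rw [← cable_singleton lam]
      simp only [List.cons_append, List.pairwise_cons, List.pairwise_append] at hs
      apply h.commute_cable <;> grind
    calc
      cable lam (i :: s) (j :: t)
        = cable lam [i] t * (lam i j * cable lam s t) * cable lam s [j] := by
          rw [cable_cons_left, cable_singleton_cons, ih hs.of_cons]
          simp only [mul_assoc]
      _ = cable lam (i :: s) t * cable lam (i :: s) [j] := by
          rw [h_comm.eq, cable_cons_left lam i s t, cable_cons_left lam i s [j], cable_singleton]
          simp only [mul_assoc]

theorem yangBaxter_cable_first (h : VPRelations lam) (hs : (s ++ [j, k]).Pairwise (· < ·)) :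
    YangBaxter (cable lam s [j]) (cable lam s [k]) (lam j k) := by
  induction s with
  | nil => simp [YangBaxter]
  | cons i s ih =>
    have h_tail := ih hs.of_cons
    simp only [List.cons_append, List.pairwise_cons, List.pairwise_append] at hs
    have h_head : YangBaxter (cable lam [i] [j]) (cable lam [i] [k]) (lam j k) := by
      simpa only [cable_singleton] using h.yangBaxter (by grind) (by grind)
    rw [cable_cons_left lam i s [j], cable_cons_left lam i s [k]]
    apply h_head.double_first h_tail <;> apply h.commute_cable <;> grind

theorem yangBaxter_cable_second (h : VPRelations lam) (hst : (s ++ t ++ [k]).Pairwise (· < ·)) :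
    YangBaxter (cable lam s t) (cable lam s [k]) (cable lam t [k]) := by
  induction t with
  | nil => simp [YangBaxter]
  | cons j t ih =>
    have h_tail := ih (hst.sublist (by simp))
    have h_head : YangBaxter (cable lam s [j]) (cable lam s [k]) (cable lam [j] [k]) := by
      simpa only [cable_singleton] using h.yangBaxter_cable_first (hst.sublist (by simp))
    rw [h.cable_cons_right (hst.sublist (by simp)), cable_cons_left lam j t [k]]
    simp only [List.pairwise_cons, List.pairwise_append] at hst
    apply h_tail.double_second h_head <;> apply h.commute_cable <;> grind

end VPRelations

theorem M_YB_general {ι M : Type*} [Preorder ι] [Monoid M] {lam : ι → ι → M} {s t u : List ι}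
    (h : VPRelations lam) (hstu : (s ++ t ++ u).Pairwise (· < ·)) :
    YangBaxter (cable lam s t) (cable lam s u) (cable lam t u) := by
  induction u with
  | nil => simp [YangBaxter]
  | cons k u ih =>
    have h_tail := ih (hstu.sublist (by simp))
    have h_head := h.yangBaxter_cable_second (s := s) (t := t) (k := k) (hstu.sublist (by simp))
    rw [h.cable_cons_right (s := s) (hstu.sublist (by simp)),
      h.cable_cons_right (s := t) (hstu.sublist (by simp))]
    simp only [List.pairwise_cons, List.pairwise_append] at hstu
    apply h_tail.double_third h_head <;> apply h.commute_cable <;> grind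

/-- If a group `G` contains elements `λ_{ij}` (`1 ≤ i < j ≤ 6`) satisfying the defining
relations of `VP₆⁺`, then the elements `M₁₂ := λ₁₄λ₁₃λ₂₄λ₂₃`, `M₁₃ := λ₁₆λ₁₅λ₂₆λ₂₅`,
`M₂₃ := λ₃₆λ₃₅λ₄₆λ₄₅` satisfy the Yang–Baxter relation `M₁₂M₁₃M₂₃ = M₂₃M₁₃M₁₂`. -/
theorem M_YB {G : Type*} [Group G] (lam : ℕ → ℕ → G)
    (hcomm : ∀ i j k m : ℕ, 1 ≤ i → i < j → j ≤ 6 → 1 ≤ k → k < m → m ≤ 6 →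
      i ≠ k → i ≠ m → j ≠ k → j ≠ m →
      lam i j * lam k m = lam k m * lam i j)
    (hyb : ∀ i j k : ℕ, 1 ≤ i → i < j → j < k → k ≤ 6 →
      lam i j * lam i k * lam j k = lam j k * lam i k * lam i j) :
    (lam 1 4 * lam 1 3 * lam 2 4 * lam 2 3) *
        (lam 1 6 * lam 1 5 * lam 2 6 * lam 2 5) *
        (lam 3 6 * lam 3 5 * lam 4 6 * lam 4 5) =
      (lam 3 6 * lam 3 5 * lam 4 6 * lam 4 5) *
        (lam 1 6 * lam 1 5 * lam 2 6 * lam 2 5) *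
        (lam 1 4 * lam 1 3 * lam 2 4 * lam 2 3) := by
  have h : VPRelations fun i j : Fin 6 ↦ lam (i + 1) (j + 1) :=
    { commute := by intros; apply hcomm <;> omega
      yangBaxter := by intros; apply hyb <;> omega }
  simpa [YangBaxter, cable, mul_assoc] using
    M_YB_general h (s := [0, 1]) (t := [2, 3]) (u := [4, 5]) (by decide)
end

section
/- Under the extension hypotheses on B, C, R^B, R^C, R, with R^B and R^C bijections, let n ≥ 2 and identify (B × C)ⁿ with the 2n-fold product having B in odd positions 2i−1 and C in even positions 2i (1 ≤ i ≤ n). Assign to each generator of Yₙ a permutation of (B × C)ⁿ as follows: to b_{2i−1,2j−1} the bijection applying R^B to the coordinates in positions (2i−1, 2j−1); to c_{2i,2j} the bijection applying R^C to positions (2i, 2j); to d_{2k,2l−1} the bijection applying R to positions (2k, 2l−1). Then these permutations satisfy all defining relations of Yₙ, so this assignment defines a group homomorphism Yₙ → Sym((B × C)ⁿ). -/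
section Action

variable {B C : Type*} {n : ℕ}

/-- The generator `b_{2i−1,2j−1}` acts on `(B × C)ⁿ` (identified with the `2n`-fold
product with `B` in odd positions `2i−1` and `C` in even positions `2i`) by applying
`R^B` to the `B`-coordinates in positions `(2i−1, 2j−1)`. -/
def actB (RB : B × B → B × B) (i j : Fin n) (f : Fin n → B × C) : Fin n → B × C :=
  Function.update (Function.update f i ((RB ((f i).1, (f j).1)).1, (f i).2)) j
    ((RB ((f i).1, (f j).1)).2, (f j).2)

/-- The generator `c_{2i,2j}` acts by applying `R^C` to the `C`-coordinates in
positions `(2i, 2j)`. -/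
def actC (RC : C × C → C × C) (i j : Fin n) (f : Fin n → B × C) : Fin n → B × C :=
  Function.update (Function.update f i ((f i).1, (RC ((f i).2, (f j).2)).1)) j
    ((f j).1, (RC ((f i).2, (f j).2)).2)

/-- The generator `d_{2k,2l−1}` acts by applying `R : C × B → C × B` to the
coordinates in positions `(2k, 2l−1)`, i.e. to the `C`-coordinate of the `k`-th factor
and the `B`-coordinate of the `l`-th factor. -/
def actD (R : C × B → C × B) (k l : Fin n) (f : Fin n → B × C) : Fin n → B × C :=
  Function.update (Function.update f k ((f k).1, (R ((f k).2, (f l).1)).1)) l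
    ((R ((f k).2, (f l).1)).2, (f l).2)

end Action

/-!
Each `B`- or `C`-entry of `(B × C)ⁿ` is a coordinate that can be read and overwritten, and distinct
entries can be overwritten in either order. Pairwise independent coordinates combine into a single
one, with values in the product, and each generator modifies such a pair of coordinates by a map.
Modifying a fixed coordinate is multiplicative in the map, so the Yang–Baxter and mixed relations
are images of identities between maps of a triple product, while the commutativity relations say
that modifications of independent coordinates commute.
-/

/-- A coordinate of the state space `S` with values in `A`: it can be read by `get` and overwritten
by `set`, subject to the laws of a (very well-behaved) lens. It plays the role of one factor of the
product `S`. Since `B` and `C` may live in different universes, `(B × C)ⁿ` is not literally a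
dependent product over its `2n` positions. -/
structure Lens (S A : Type*) where
  get : S → A
  set : S → A → S
  get_set (s : S) (a : A) : get (set s a) = a
  set_get (s : S) : set s (get s) = s
  set_set (s : S) (a a' : A) : set (set s a) a' = set s a'

namespace Lens

variable {S A A' A'' D : Type*} {p : Lens S A} {q : Lens S A'} {r : Lens S A''} {t : Lens S D}

/-- Two coordinates are independent if they may be overwritten in either order; they correspond to
distinct factors of a product. -/
def Independent (p : Lens S A) (q : Lens S A') : Prop :=
  ∀ s a a', q.set (p.set s a) a' = p.set (q.set s a') a

theorem Independent.symm (h : p.Independent q) : q.Independent p :=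
  fun s a' a => (h s a a').symm

theorem Independent.get_set (h : p.Independent q) (s : S) (a' : A') :
    p.get (q.set s a') = p.get s :=
  calc p.get (q.set s a')
      = p.get (q.set (p.set s (p.get s)) a') := by rw [p.set_get]
    _ = p.get s := by rw [h, p.get_set]

/-- The joint coordinate of two independent coordinates, the analogue of a pair of factors of a
product. -/
def prod (p : Lens S A) (q : Lens S A') (h : p.Independent q) : Lens S (A × A') where
  get s := (p.get s, q.get s)
  set s a := q.set (p.set s a.1) a.2
  get_set s a := by rw [h.get_set, p.get_set, q.get_set]
  set_get s := by rw [p.set_get, q.set_get]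
  set_set s a a' := by rw [← h, p.set_set, q.set_set]

theorem Independent.prod_right (hpq : p.Independent q) (hpr : p.Independent r)
    (hqr : q.Independent r) : p.Independent (q.prod r hqr) := fun s a a' => by
  simp only [prod, hpq s, hpr (q.set s a'.1)]

theorem Independent.prod_left (hpr : p.Independent r) (hqr : q.Independent r)
    (hpq : p.Independent q) : (p.prod q hpq).Independent r :=
  (hpr.symm.prod_right hqr.symm hpq).symm

/-- The action on states of a self-map of the values of a coordinate; for a joint coordinate
`p.prod q` this is the map written `T_{pq}` in the paper. -/
def modify (p : Lens S A) (T : A → A) (s : S) : S :=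
  p.set s (T (p.get s))

theorem modify_comp (p : Lens S A) (T U : A → A) :
    p.modify (T ∘ U) = p.modify T ∘ p.modify U := by
  funext s
  simp only [modify, Function.comp_apply, p.get_set, p.set_set]

theorem Independent.modify_comp_modify_comm (h : p.Independent q) (T : A → A) (U : A' → A') :
    p.modify T ∘ q.modify U = q.modify U ∘ p.modify T := by
  funext s
  simp only [modify, Function.comp_apply, h.get_set, h.symm.get_set, h s]

theorem modify_prod_comp_modify_prod_comm (hpq : p.Independent q) (hrt : r.Independent t)
    (hpr : p.Independent r) (hpt : p.Independent t) (hqr : q.Independent r)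
    (hqt : q.Independent t) (T : A × A' → A × A') (U : A'' × D → A'' × D) :
    (p.prod q hpq).modify T ∘ (r.prod t hrt).modify U =
      (r.prod t hrt).modify U ∘ (p.prod q hpq).modify T :=
  ((hpr.prod_right hpt hrt).prod_left (hqr.prod_right hqt hrt) hpq).modify_comp_modify_comm T U

/-- The joint coordinate of three pairwise independent coordinates, on which `lift12`, `lift13` and
`lift23` act. -/
def prod₃ (p : Lens S A) (q : Lens S A') (r : Lens S A'') (hpq : p.Independent q)
    (hpr : p.Independent r) (hqr : q.Independent r) : Lens S (A × A' × A'') :=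
  p.prod (q.prod r hqr) (hpq.prod_right hpr hqr)

section Triple

variable (hpq : p.Independent q) (hpr : p.Independent r) (hqr : q.Independent r)

theorem modify_lift12 (T : A × A' → A × A') :
    (p.prod₃ q r hpq hpr hqr).modify (lift12 T) = (p.prod q hpq).modify T := by
  funext s
  simp only [modify, prod₃, prod, lift12]
  rw [← hpr.symm.get_set s, ← hqr.symm.get_set (p.set s _), r.set_get]

theorem modify_lift13 (T : A × A'' → A × A'') :
    (p.prod₃ q r hpq hpr hqr).modify (lift13 T) = (p.prod r hpr).modify T := by
  funext s
  simp only [modify, prod₃, prod, lift13]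
  rw [← hpq.symm.get_set s, q.set_get]

theorem modify_lift23 (T : A' × A'' → A' × A'') :
    (p.prod₃ q r hpq hpr hqr).modify (lift23 T) = (q.prod r hqr).modify T := by
  funext s
  simp only [modify, prod₃, prod, lift23, p.set_get]

end Triple

end Lens

section Coordinates

variable {ι B C : Type*} [DecidableEq ι] {i j : ι}

/-- The `i`-th `B`-coordinate of `(B × C)ⁿ`, in position `2i−1` of the `2n`-fold product. -/
def coordB (i : ι) : Lens (ι → B × C) B where
  get f := (f i).1
  set f b := Function.update f i (b, (f i).2)
  get_set f b := by simp
  set_get f := by simp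
  set_set f b b' := by simp

/-- The `i`-th `C`-coordinate of `(B × C)ⁿ`, in position `2i` of the `2n`-fold product. -/
def coordC (i : ι) : Lens (ι → B × C) C where
  get f := (f i).2
  set f c := Function.update f i ((f i).1, c)
  get_set f c := by simp
  set_get f := by simp
  set_set f c c' := by simp

theorem coordB_independent_coordB (h : i ≠ j) :
    (coordB i : Lens (ι → B × C) B).Independent (coordB j) := fun f b b' => by
  simp only [coordB, Function.update_of_ne h, Function.update_of_ne h.symm,
    Function.update_comm h]

theorem coordC_independent_coordC (h : i ≠ j) :
    (coordC i : Lens (ι → B × C) C).Independent (coordC j) := fun f c c' => by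
  simp only [coordC, Function.update_of_ne h, Function.update_of_ne h.symm,
    Function.update_comm h]

theorem coordC_independent_coordB (i j : ι) :
    (coordC i : Lens (ι → B × C) C).Independent (coordB j) := fun f c b => by
  obtain rfl | h := eq_or_ne i j
  · simp only [coordC, coordB, Function.update_self, Function.update_idem]
  · simp only [coordC, coordB, Function.update_of_ne h, Function.update_of_ne h.symm,
      Function.update_comm h]

end Coordinates

section Relations

variable {B C : Type*} {n : ℕ} {i j k l : Fin n}

theorem actB_eq_modify (RB : B × B → B × B) (h : i ≠ j) :
    actB (C := C) RB i j =
      ((coordB i).prod (coordB j) (coordB_independent_coordB h)).modify RB := by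
  funext f
  simp only [actB, Lens.modify, Lens.prod, coordB, Function.update_of_ne h.symm]

theorem actC_eq_modify (RC : C × C → C × C) (h : i ≠ j) :
    actC (B := B) RC i j =
      ((coordC i).prod (coordC j) (coordC_independent_coordC h)).modify RC := by
  funext f
  simp only [actC, Lens.modify, Lens.prod, coordC, Function.update_of_ne h.symm]

theorem actD_eq_modify (R : C × B → C × B) (h : k ≠ l) :
    actD R k l = ((coordC k).prod (coordB l) (coordC_independent_coordB k l)).modify R := by
  funext f
  simp only [actD, Lens.modify, Lens.prod, coordC, coordB, Function.update_of_ne h.symm]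

theorem actB_yangBaxter {RB : B × B → B × B} (hB : IsYB RB) (hij : i ≠ j) (hik : i ≠ k)
    (hjk : j ≠ k) :
    actB (C := C) RB i j ∘ actB RB i k ∘ actB RB j k =
      actB RB j k ∘ actB RB i k ∘ actB RB i j := by
  have hB' := congrArg (Lens.modify <| (coordB (C := C) i).prod₃ (coordB j) (coordB k)
    (coordB_independent_coordB hij) (coordB_independent_coordB hik)
    (coordB_independent_coordB hjk)) hB
  simpa only [Lens.modify_comp, Lens.modify_lift12, Lens.modify_lift13, Lens.modify_lift23,
    ← actB_eq_modify RB hij, ← actB_eq_modify RB hik, ← actB_eq_modify RB hjk] using hB'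

theorem actC_yangBaxter {RC : C × C → C × C} (hC : IsYB RC) (hij : i ≠ j) (hik : i ≠ k)
    (hjk : j ≠ k) :
    actC (B := B) RC i j ∘ actC RC i k ∘ actC RC j k =
      actC RC j k ∘ actC RC i k ∘ actC RC i j := by
  have hC' := congrArg (Lens.modify <| (coordC (B := B) i).prod₃ (coordC j) (coordC k)
    (coordC_independent_coordC hij) (coordC_independent_coordC hik)
    (coordC_independent_coordC hjk)) hC
  simpa only [Lens.modify_comp, Lens.modify_lift12, Lens.modify_lift13, Lens.modify_lift23,
    ← actC_eq_modify RC hij, ← actC_eq_modify RC hik, ← actC_eq_modify RC hjk] using hC'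

theorem actB_comp_actC_comm (RB : B × B → B × B) (RC : C × C → C × C) (hij : i ≠ j)
    (hkl : k ≠ l) : actB RB i j ∘ actC RC k l = actC RC k l ∘ actB RB i j := by
  rw [actB_eq_modify RB hij, actC_eq_modify RC hkl]
  exact Lens.modify_prod_comp_modify_prod_comm _ _
    (coordC_independent_coordB k i).symm (coordC_independent_coordB l i).symm
    (coordC_independent_coordB k j).symm (coordC_independent_coordB l j).symm RB RC

theorem actB_comp_actD_comm (RB : B × B → B × B) (R : C × B → C × B) (hij : i ≠ j)
    (hkl : k ≠ l) (hil : i ≠ l) (hjl : j ≠ l) :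
    actB RB i j ∘ actD R k l = actD R k l ∘ actB RB i j := by
  rw [actB_eq_modify RB hij, actD_eq_modify R hkl]
  exact Lens.modify_prod_comp_modify_prod_comm _ _
    (coordC_independent_coordB k i).symm (coordB_independent_coordB hil)
    (coordC_independent_coordB k j).symm (coordB_independent_coordB hjl) RB R

theorem actC_comp_actD_comm (RC : C × C → C × C) (R : C × B → C × B) (hij : i ≠ j)
    (hkl : k ≠ l) (hik : i ≠ k) (hjk : j ≠ k) :
    actC RC i j ∘ actD R k l = actD R k l ∘ actC RC i j := by
  rw [actC_eq_modify RC hij, actD_eq_modify R hkl]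
  exact Lens.modify_prod_comp_modify_prod_comm _ _
    (coordC_independent_coordC hik) (coordC_independent_coordB i l)
    (coordC_independent_coordC hjk) (coordC_independent_coordB j l) RC R

theorem actD_comp_actD_comm (R R' : C × B → C × B) (hij : i ≠ j) (hkl : k ≠ l) (hik : i ≠ k)
    (hjl : j ≠ l) : actD R i j ∘ actD R' k l = actD R' k l ∘ actD R i j := by
  rw [actD_eq_modify R hij, actD_eq_modify R' hkl]
  exact Lens.modify_prod_comp_modify_prod_comm _ _
    (coordC_independent_coordC hik) (coordC_independent_coordB i l)
    (coordC_independent_coordB k j).symm (coordB_independent_coordB hjl) R R'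

theorem actB_actD_mixed {RB : B × B → B × B} {R : C × B → C × B}
    (hRB : lift23 (X := C) RB ∘ lift12 (Z := B) R ∘ lift13 (Y := B) R =
      lift13 (Y := B) R ∘ lift12 (Z := B) R ∘ lift23 (X := C) RB)
    (hij : i ≠ j) (hki : k ≠ i) (hkj : k ≠ j) :
    actB RB i j ∘ actD R k i ∘ actD R k j = actD R k j ∘ actD R k i ∘ actB RB i j := by
  have hRB' := congrArg (Lens.modify <| (coordC k).prod₃ (coordB i) (coordB j)
    (coordC_independent_coordB k i) (coordC_independent_coordB k j)
    (coordB_independent_coordB hij)) hRB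
  simpa only [Lens.modify_comp, Lens.modify_lift12, Lens.modify_lift13, Lens.modify_lift23,
    ← actB_eq_modify RB hij, ← actD_eq_modify R hki, ← actD_eq_modify R hkj] using hRB'

theorem actC_actD_mixed {RC : C × C → C × C} {R : C × B → C × B}
    (hRC : lift12 (Z := B) RC ∘ lift23 (X := C) R ∘ lift13 (Y := C) R =
      lift13 (Y := C) R ∘ lift23 (X := C) R ∘ lift12 (Z := B) RC)
    (hij : i ≠ j) (hik : i ≠ k) (hjk : j ≠ k) :
    actC RC i j ∘ actD R j k ∘ actD R i k = actD R i k ∘ actD R j k ∘ actC RC i j := by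
  have hRC' := congrArg (Lens.modify <| (coordC i).prod₃ (coordC j) (coordB k)
    (coordC_independent_coordC hij) (coordC_independent_coordB i k)
    (coordC_independent_coordB j k)) hRC
  simpa only [Lens.modify_comp, Lens.modify_lift12, Lens.modify_lift13, Lens.modify_lift23,
    ← actC_eq_modify RC hij, ← actD_eq_modify R hik, ← actD_eq_modify R hjk] using hRC'

end Relations

theorem yn_representation_general {B C : Type*} {n : ℕ}
    (RB : B × B → B × B) (RC : C × C → C × C) (hB : IsYB RB) (hC : IsYB RC)
    (R : C × B → C × B)
    (hRB : lift23 (X := C) RB ∘ lift12 (Z := B) R ∘ lift13 (Y := B) R =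
      lift13 (Y := B) R ∘ lift12 (Z := B) R ∘ lift23 (X := C) RB)
    (hRC : lift12 (Z := B) RC ∘ lift23 (X := C) R ∘ lift13 (Y := C) R =
      lift13 (Y := C) R ∘ lift23 (X := C) R ∘ lift12 (Z := B) RC) :
    (∀ i j k : Fin n, i < j → j < k →
      actB (C := C) RB i j ∘ actB RB i k ∘ actB RB j k =
        actB RB j k ∘ actB RB i k ∘ actB RB i j) ∧
    (∀ i j k : Fin n, i < j → j < k →
      actC (B := B) RC i j ∘ actC RC i k ∘ actC RC j k =
        actC RC j k ∘ actC RC i k ∘ actC RC i j) ∧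
    (∀ i j k l : Fin n, i < j → k < l →
      actB (C := C) RB i j ∘ actC RC k l = actC RC k l ∘ actB RB i j) ∧
    (∀ i j k l : Fin n, i < j → k ≠ l → l ≠ i → l ≠ j →
      actB (C := C) RB i j ∘ actD R k l = actD R k l ∘ actB RB i j) ∧
    (∀ i j k l : Fin n, i < j → k ≠ l → k ≠ i → k ≠ j →
      actC (B := B) RC i j ∘ actD R k l = actD R k l ∘ actC RC i j) ∧
    (∀ i j k l : Fin n, i ≠ j → k ≠ l → i ≠ k → j ≠ l →
      actD (B := B) (C := C) R i j ∘ actD R k l = actD R k l ∘ actD R i j) ∧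
    (∀ i j k : Fin n, i < j → k ≠ i → k ≠ j →
      actB (C := C) RB i j ∘ actD R k i ∘ actD R k j =
        actD R k j ∘ actD R k i ∘ actB RB i j) ∧
    (∀ i j k : Fin n, i < j → k ≠ i → k ≠ j →
      actC (B := B) RC i j ∘ actD R j k ∘ actD R i k =
        actD R i k ∘ actD R j k ∘ actC RC i j) :=
  ⟨fun _ _ _ hij hjk => actB_yangBaxter hB hij.ne (hij.trans hjk).ne hjk.ne,
    fun _ _ _ hij hjk => actC_yangBaxter hC hij.ne (hij.trans hjk).ne hjk.ne,
    fun _ _ _ _ hij hkl => actB_comp_actC_comm RB RC hij.ne hkl.ne,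
    fun _ _ _ _ hij hkl hli hlj => actB_comp_actD_comm RB R hij.ne hkl hli.symm hlj.symm,
    fun _ _ _ _ hij hkl hki hkj => actC_comp_actD_comm RC R hij.ne hkl hki.symm hkj.symm,
    fun _ _ _ _ hij hkl hik hjl => actD_comp_actD_comm R R hij hkl hik hjl,
    fun _ _ _ hij hki hkj => actB_actD_mixed hRB hij.ne hki hkj,
    fun _ _ _ hij hki hkj => actC_actD_mixed hRC hij.ne hki.symm hkj.symm⟩

/-- Under the extension hypotheses on `B, C, R^B, R^C, R`, with `R^B` and `R^C`
bijections and `n ≥ 2`, the permutations of `(B × C)ⁿ` assigned to the generators of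
`Yₙ` (namely `b_{2i−1,2j−1} ↦ (R^B)_{2i−1,2j−1}`, `c_{2i,2j} ↦ (R^C)_{2i,2j}`,
`d_{2k,2l−1} ↦ R_{2k,2l−1}`) satisfy all defining relations of `Yₙ`, hence this
assignment defines a group homomorphism `Yₙ → Sym((B × C)ⁿ)`. -/
theorem yn_representation {B C : Type*} (n : ℕ) (hn : 2 ≤ n)
    (RB : B × B → B × B) (RC : C × C → C × C)
    (hB : IsYB RB) (hC : IsYB RC)
    (hBbij : Function.Bijective RB) (hCbij : Function.Bijective RC)
    (R : C × B ≃ C × B)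
    (hRB : lift23 (X := C) RB ∘ lift12 (Z := B) ⇑R ∘ lift13 (Y := B) ⇑R =
      lift13 (Y := B) ⇑R ∘ lift12 (Z := B) ⇑R ∘ lift23 (X := C) RB)
    (hRC : lift12 (Z := B) RC ∘ lift23 (X := C) ⇑R ∘ lift13 (Y := C) ⇑R =
      lift13 (Y := C) ⇑R ∘ lift23 (X := C) ⇑R ∘ lift12 (Z := B) RC) :
    -- Yang–Baxter relations for the b's
    (∀ i j k : Fin n, i < j → j < k →
      actB (C := C) RB i j ∘ actB RB i k ∘ actB RB j k =
        actB RB j k ∘ actB RB i k ∘ actB RB i j) ∧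
    -- Yang–Baxter relations for the c's
    (∀ i j k : Fin n, i < j → j < k →
      actC (B := B) RC i j ∘ actC RC i k ∘ actC RC j k =
        actC RC j k ∘ actC RC i k ∘ actC RC i j) ∧
    -- commutativity: every b with every c
    (∀ i j k l : Fin n, i < j → k < l →
      actB (C := C) RB i j ∘ actC RC k l = actC RC k l ∘ actB RB i j) ∧
    -- commutativity: b with d, all indices pairwise distinct
    (∀ i j k l : Fin n, i < j → k ≠ l → l ≠ i → l ≠ j →
      actB (C := C) RB i j ∘ actD ⇑R k l = actD ⇑R k l ∘ actB RB i j) ∧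
    -- commutativity: c with d, all indices pairwise distinct
    (∀ i j k l : Fin n, i < j → k ≠ l → k ≠ i → k ≠ j →
      actC (B := B) RC i j ∘ actD ⇑R k l = actD ⇑R k l ∘ actC RC i j) ∧
    -- commutativity: d with d, all indices pairwise distinct
    (∀ i j k l : Fin n, i ≠ j → k ≠ l → i ≠ k → j ≠ l →
      actD (B := B) (C := C) ⇑R i j ∘ actD ⇑R k l = actD ⇑R k l ∘ actD ⇑R i j) ∧
    -- mixed relations with b's
    (∀ i j k : Fin n, i < j → k ≠ i → k ≠ j →
      actB (C := C) RB i j ∘ actD ⇑R k i ∘ actD ⇑R k j =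
        actD ⇑R k j ∘ actD ⇑R k i ∘ actB RB i j) ∧
    -- mixed relations with c's
    (∀ i j k : Fin n, i < j → k ≠ i → k ≠ j →
      actC (B := B) RC i j ∘ actD ⇑R j k ∘ actD ⇑R i k =
        actD ⇑R i k ∘ actD ⇑R j k ∘ actC RC i j) :=
  yn_representation_general RB RC hB hC R hRB hRC
end
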